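/- (Theorem B, case ν > 0) Assume the integrality condition on (μ,ν) with ν > 0, let j ∈ ℕ, and let u : ℝ_+ → ℝ be a smooth function in L²(ℝ_+, x^{μ+ν+1}dx) satisfying D_{μ,ν}u = 4j(j+μ+1)u on ℝ_+. Suppose the limit B := lim_{x→0+} x^ν u(x) exists. Then for all ϑ, φ ∈ [0,π] with cos ϑ + cos φ > 0, ∫₀^∞ u(x) J̃_{μ/2}(ax) J̃_{ν/2}(bx) x^{μ+ν+1} dx = A · ((cos ϑ + cos φ)/2)^{(μ+ν+2)/2} · C̃_j^{(μ+1)/2}(cos ϑ) · C̃_{j+(μ−ν)/2}^{(ν+1)/2}(cos φ), where a = sin ϑ/(cos ϑ + cos φ), b = sin φ/(cos ϑ + cos φ), and the constant A equals A = (−1)^j · (j! 2^{2μ+ν} Γ((μ+2)/2) Γ((μ−ν+2)/2) Γ(j+(μ−ν+2)/2))/(Γ(j+(μ−ν+2)/2) π Γ(j+μ+1)) · (2/Γ(ν/2)) · B. -/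

import Mathlib

open MeasureTheory Real Filter Set Metric

noncomputable section

/-- Normalized Bessel function of the first kind: `J̃_α(x) = (x/2)^{-α} J_α(x)`,
given by its (entire) power series. -/
def besselJt (α x : ℝ) : ℝ :=
  ∑' m : ℕ, (-1) ^ m / (m.factorial * Real.Gamma (m + α + 1)) * (x / 2) ^ (2 * m)

/-- Bessel function of the first kind `J_α`. -/
def besselJ (α x : ℝ) : ℝ :=
  ∑' m : ℕ, (-1) ^ m / (m.factorial * Real.Gamma (m + α + 1)) * (x / 2) ^ (2 * (m : ℝ) + α)

/-- Normalized modified Bessel function `Ĩ_α(x) = (x/2)^{-α} I_α(x)`,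
given by its (entire, even) power series. -/
def besselIt (α x : ℝ) : ℝ :=
  ∑' m : ℕ, (x / 2) ^ (2 * m) / (m.factorial * Real.Gamma (m + α + 1))

/-- Modified Bessel function of the first kind `I_α`. -/
def besselI (α x : ℝ) : ℝ :=
  ∑' m : ℕ, (x / 2) ^ (2 * (m : ℝ) + α) / (m.factorial * Real.Gamma (m + α + 1))

/-- Modified Bessel function of the second kind,
`K_α(x) = lim_{β→α} (π/2)(I_{−β}(x) − I_β(x))/sin(βπ)`. -/
def besselK (α x : ℝ) : ℝ :=
  limUnder (nhdsWithin α {α}ᶜ) fun β =>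
    Real.pi / 2 * (besselI (-β) x - besselI β x) / Real.sin (β * Real.pi)

/-- Normalized K-Bessel function `K̃_α(x) = (x/2)^{-α} K_α(x)`. -/
def besselKt (α x : ℝ) : ℝ := (x / 2) ^ (-α) * besselK α x

/-- Normalized Gegenbauer polynomial `C̃_n^λ = Γ(λ) C_n^λ`, where `C_n^λ` is defined via the
generating function `(1 − 2xt + t²)^{−λ} = Σ_{n≥0} C_n^λ(x) tⁿ`; explicitly,
`C̃_n^λ(x) = Σ_{k=0}^{⌊n/2⌋} (−1)^k Γ(λ+n−k)/(k!(n−2k)!) (2x)^{n−2k}`.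
This expression also gives the limit value `C̃_n^0 = lim_{λ→0+} Γ(λ) C_n^λ` for `n ≥ 1`. -/
def gegenbauerCt (n : ℕ) (l x : ℝ) : ℝ :=
  ∑ k ∈ Finset.range (n / 2 + 1),
    (-1) ^ k * Real.Gamma (l + n - k) / (k.factorial * (n - 2 * k).factorial)
      * (2 * x) ^ (n - 2 * k)

/-- Laguerre polynomial `L_n^μ(x) = Σ_{k=0}^n (−1)^k binom(n+μ, n−k) x^k/k!`
(with nonnegative integer parameter `μ`). -/
def laguerreL (n μ : ℕ) (x : ℝ) : ℝ :=
  ∑ k ∈ Finset.range (n + 1),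
    (-1) ^ k * (Nat.choose (n + μ) (n - k)) * x ^ k / k.factorial

/-- The Euler operator `θ = x d/dx`. -/
def eulerOp (u : ℝ → ℝ) : ℝ → ℝ := fun x => x * deriv u x

/-- `(θ+c)(θ+c+ν)u − x² u`, i.e. the operator `Q_ν(θ+c)` applied to `u`. -/
def besselQ (ν c : ℝ) (u : ℝ → ℝ) : ℝ → ℝ := fun x =>
  eulerOp (fun y => eulerOp u y + (c + ν) * u y) x
    + c * (eulerOp u x + (c + ν) * u x) - x ^ 2 * u x

/-- The fourth order differential operator
`D_{μ,ν} = x^{−2}((θ+μ)(θ+μ+ν) − x²)(θ(θ+ν) − x²)`. -/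
def Dop (μ ν : ℝ) (u : ℝ → ℝ) : ℝ → ℝ := fun x =>
  besselQ ν μ (besselQ ν 0 u) x / x ^ 2

/-- The generating function
`G^{μ,ν}(t,x) = (1−t)^{−(μ+ν+2)/2} Ĩ_{μ/2}(tx/(1−t)) K̃_{ν/2}(x/(1−t))`. -/
def genFun (μ ν t x : ℝ) : ℝ :=
  (1 - t) ^ (-(μ + ν + 2) / 2) * besselIt (μ / 2) (t * x / (1 - t))
    * besselKt (ν / 2) (x / (1 - t))

/-- The eigenfunctions `Λ_j^{μ,ν}`, defined as the Taylor coefficients in `t` at `t = 0` of the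
generating function `G^{μ,ν}(t,x) = Σ_{j≥0} Λ_j^{μ,ν}(x) t^j`. -/
def LambdaF (μ ν : ℝ) (j : ℕ) (x : ℝ) : ℝ :=
  iteratedDeriv j (fun t => genFun μ ν t x) 0 / j.factorial

/-- The integrality condition: `μ ≥ ν ≥ −1` are integers of the same parity,
not both equal to `−1`. -/
def IntCond (μ ν : ℤ) : Prop :=
  -1 ≤ ν ∧ ν ≤ μ ∧ Even (μ - ν) ∧ ¬(μ = -1 ∧ ν = -1)

end

/-!
A square integrable eigenfunction decays exponentially, so on the scale `x = e^t` the eigenvalue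
equation can be integrated by parts against products of Bessel functions; what comes out is one
linear relation between the moments `∫ u(x) J̃_α(a x) J̃_β(b x) x^{μ+ν+1+2k} dx`.

For `a = sin ϑ / (cos ϑ + cos φ)`, `b = sin φ / (cos ϑ + cos φ)` this relation says that the
transform, divided by `(cos ϑ + cos φ)^{(μ+ν+2)/2}`, satisfies the Gegenbauer equation in `ϑ` for
fixed `φ`, and by symmetry in `φ` for fixed `ϑ`. Only one solution of each equation is regular at
`0`, so the transform is its value at `ϑ = φ = 0` times the product of Gegenbauer polynomials.

To compute that value, put `b = 0`: the transform is then a Hankel transform in `a`, and inverting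
it at the origin returns `B`. The integral of the Gegenbauer factor that appears is evaluated
termwise from the Taylor expansion at `1` with beta integrals and the Chu–Vandermonde identity.
-/

open Asymptotics
open scoped Topology

/-! ### Square integrable solutions decay exponentially -/

section Decay

variable {f f' f'' p p' p'' q q' P : ℝ → ℝ} {c c₁ c₂ c₃ l C : ℝ}

lemma monotoneOn_Ici_of_hasDerivAt_nonneg {a : ℝ} (hf : ∀ x ≥ a, HasDerivAt f (f' x) x)
    (hf' : ∀ x ≥ a, 0 ≤ f' x) : MonotoneOn f (Ici a) := by
  refine monotoneOn_of_hasDerivWithinAt_nonneg (f' := f') (convex_Ici a)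
    (fun x hx ↦ (hf x hx).continuousAt.continuousWithinAt) ?_ ?_
  · exact fun x hx ↦ (hf x (interior_subset hx)).hasDerivWithinAt
  · exact fun x hx ↦ hf' x (interior_subset hx)

lemma tendsto_atTop_of_eventually_le_deriv (hc : 0 < c)
    (hf : ∀ᶠ x in atTop, HasDerivAt f (f' x) x) (hf' : ∀ᶠ x in atTop, c ≤ f' x) :
    Tendsto f atTop atTop := by
  obtain ⟨a, ha⟩ := eventually_atTop.1 (hf.and hf')
  have hmono : MonotoneOn (fun x ↦ f x - c * x) (Ici a) :=
    monotoneOn_Ici_of_hasDerivAt_nonneg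
      (fun x hx ↦ (ha x hx).1.sub ((hasDerivAt_id x).const_mul c))
      (fun x hx ↦ by linarith [(ha x hx).2])
  have hlin : Tendsto (fun x ↦ (f a - c * a) + c * x) atTop atTop :=
    tendsto_atTop_add_const_left _ _ (tendsto_id.const_mul_atTop hc)
  refine tendsto_atTop_mono' _ ?_ hlin
  filter_upwards [eventually_ge_atTop a] with x hx
  have := hmono self_mem_Ici hx hx
  simp only at this
  linarith

lemma tendsto_atTop_of_tendsto_add {f g : ℝ → ℝ} (h : Tendsto (fun x ↦ f x + g x) atTop atTop)
    (hg : ∀ᶠ x in atTop, g x ≤ C) : Tendsto f atTop atTop := by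
  refine tendsto_atTop_mono' _ ?_ (tendsto_atTop_add_const_right _ (-C) h)
  filter_upwards [hg] with x hx
  linarith

lemma eventually_abs_const_div_pow_le (c : ℝ) {n : ℕ} (hn : n ≠ 0) {ε : ℝ} (hε : 0 < ε) :
    ∀ᶠ x : ℝ in atTop, |c / x ^ n| ≤ ε := by
  have h := ((tendsto_pow_atTop hn).const_div_atTop c : Tendsto (fun x : ℝ ↦ c / x ^ n) _ _)
  exact h.abs.eventually_le_const (by rwa [abs_zero])

lemma eventually_abs_const_div_le (c : ℝ) {ε : ℝ} (hε : 0 < ε) :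
    ∀ᶠ x : ℝ in atTop, |c / x| ≤ ε := by
  simpa using eventually_abs_const_div_pow_le c one_ne_zero hε

-- First `p' + (c / x) p + P / 2` and then `p + P` tends to infinity, so `p` is not in `L²`.
lemma false_of_add_one_le_of_sq_primitive_bounded
    (hp : ∀ᶠ x in atTop, HasDerivAt p (p' x) x) (hp' : ∀ᶠ x in atTop, HasDerivAt p' (p'' x) x)
    (hP : ∀ᶠ x in atTop, HasDerivAt P (p x ^ 2) x) (hPC : ∀ᶠ x in atTop, P x ≤ C)
    (hge : ∀ᶠ x in atTop, p x + 1 ≤ p'' x + c / x * p' x) : False := by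
  have hflux : Tendsto (fun x ↦ p' x + c / x * p x + P x / 2) atTop atTop := by
    refine tendsto_atTop_of_eventually_le_deriv (c := 1 / 4) (by norm_num)
      (f' := fun x ↦ p'' x + (-(c / x ^ 2) * p x + c / x * p' x) + p x ^ 2 / 2) ?_ ?_
    · filter_upwards [hp, hp', hP, eventually_ne_atTop 0] with x hp hp' hP hx
      have hinv : HasDerivAt (fun x ↦ c / x) (-(c / x ^ 2)) x :=
        ((hasDerivAt_inv hx).const_mul c).congr_deriv (by field_simp)
      exact (hp'.add (hinv.mul hp)).add (hP.div_const 2)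
    · filter_upwards [hge, eventually_abs_const_div_pow_le c two_ne_zero
        (show (0 : ℝ) < 1 / 8 by norm_num)] with x hge hx
      obtain ⟨h₁, h₂⟩ := abs_le.1 hx
      nlinarith [sq_nonneg (p x + (1 - c / x ^ 2))]
  have hflux' : Tendsto (fun x ↦ p' x + c / x * p x) atTop atTop :=
    tendsto_atTop_of_tendsto_add hflux (C := C / 2) (hPC.mono fun x hx ↦ by linarith)
  have hpP : Tendsto (fun x ↦ p x + P x) atTop atTop := by
    refine tendsto_atTop_of_eventually_le_deriv one_pos
      (hp.and hP |>.mono fun x hx ↦ hx.1.add hx.2) ?_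
    filter_upwards [hflux'.eventually_ge_atTop 2, eventually_abs_const_div_le c one_pos]
      with x hx hc
    obtain ⟨h₁, h₂⟩ := abs_le.1 hc
    nlinarith [sq_nonneg (p x - c / x)]
  have hP_top : Tendsto P atTop atTop := by
    refine tendsto_atTop_of_eventually_le_deriv one_pos hP ?_
    filter_upwards [(tendsto_atTop_of_tendsto_add hpP hPC).eventually_ge_atTop 1] with x hx
    nlinarith
  obtain ⟨x, hx₁, hx₂⟩ := (hPC.and (hP_top.eventually_gt_atTop C)).exists
  exact hx₁.not_gt hx₂

lemma isBigO_exp_neg_of_le_deriv_deriv {a : ℝ} (h₀ : ∀ x, 0 ≤ f x)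
    (hf : ∀ x ≥ a, HasDerivAt f (f' x) x) (hf' : ∀ x ≥ a, HasDerivAt f' (f'' x) x)
    (hle : ∀ x ≥ a, f x ≤ f'' x) (hneg : ∀ x ≥ a, f' x ≤ 0) :
    f =O[atTop] fun x ↦ exp (-x) := by
  have hbdd : ∀ x ≥ a, f x ≤ f a := fun x hx ↦ neg_le_neg_iff.1 <|
    monotoneOn_Ici_of_hasDerivAt_nonneg (f := fun x ↦ -f x) (fun y hy ↦ (hf y hy).neg)
      (fun y hy ↦ by linarith [hneg y hy]) self_mem_Ici hx hx
  have hmono : MonotoneOn (fun x ↦ exp (-x) * (f' x + f x)) (Ici a) := by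
    refine monotoneOn_Ici_of_hasDerivAt_nonneg
      (fun x hx ↦ (hasDerivAt_neg x).exp.mul ((hf' x hx).add (hf x hx))) fun x hx ↦ ?_
    nlinarith [hle x hx, exp_pos (-x)]
  have hsum : ∀ x ≥ a, f' x + f x ≤ 0 := by
    intro x hx
    by_contra! hpos
    have hgrow : Tendsto (fun y ↦ exp y * (exp (-x) * (f' x + f x))) atTop atTop :=
      tendsto_exp_atTop.atTop_mul_const (by positivity)
    obtain ⟨y, hy, hyx⟩ :=
      ((hgrow.eventually_gt_atTop (f a)).and (eventually_ge_atTop x)).exists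
    have hle := mul_le_mul_of_nonneg_left (hmono hx (le_trans hx hyx) hyx) (exp_pos y).le
    simp only [← mul_assoc, ← exp_add, add_neg_cancel, exp_zero, one_mul] at hle hy
    linarith [hbdd y (le_trans hx hyx), hneg y (le_trans hx hyx)]
  have hanti : MonotoneOn (fun x ↦ -(exp x * f x)) (Ici a) :=
    monotoneOn_Ici_of_hasDerivAt_nonneg
      (fun x hx ↦ ((Real.hasDerivAt_exp x).mul (hf x hx)).neg)
      (fun x hx ↦ by nlinarith [hsum x hx, exp_pos x])
  refine IsBigO.of_bound (exp a * f a) ?_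
  filter_upwards [eventually_ge_atTop a] with x hx
  have hle := mul_le_mul_of_nonneg_right (neg_le_neg_iff.1 (hanti self_mem_Ici hx hx))
    (exp_pos (-x)).le
  rw [mul_right_comm, ← exp_add, add_neg_cancel, exp_zero, one_mul] at hle
  rwa [norm_of_nonneg (h₀ x), norm_of_nonneg (exp_pos _).le]

lemma isBigO_exp_neg_or_eventually_le_deriv (h₀ : ∀ x, 0 ≤ f x)
    (hf : ∀ᶠ x in atTop, HasDerivAt f (f' x) x) (hf' : ∀ᶠ x in atTop, HasDerivAt f' (f'' x) x)
    (hle : ∀ᶠ x in atTop, f x ≤ f'' x) :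
    f =O[atTop] (fun x ↦ exp (-x)) ∨ ∃ d > 0, ∀ᶠ x in atTop, d ≤ f' x := by
  obtain ⟨a, ha⟩ := eventually_atTop.1 (hf.and (hf'.and hle))
  by_cases! h : ∃ x ≥ a, 0 < f' x
  · obtain ⟨x, hx, hpos⟩ := h
    refine .inr ⟨f' x, hpos, (eventually_ge_atTop x).mono fun y hy ↦ ?_⟩
    exact monotoneOn_Ici_of_hasDerivAt_nonneg (fun z hz ↦ (ha z hz).2.1)
      (fun z hz ↦ (h₀ z).trans (ha z hz).2.2) hx (le_trans hx hy) hy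
  · exact .inl <| isBigO_exp_neg_of_le_deriv_deriv h₀ (fun x hx ↦ (ha x hx).1)
      (fun x hx ↦ (ha x hx).2.1) (fun x hx ↦ (ha x hx).2.2) h

/-- The equation `D_{μ,ν} u = l u` near infinity, written as two second order equations for `p = u`
and `q = x⁻¹ (θ (θ + ν) - x²) u`; `p'` and `q'` are the derivatives of `p` and `q`. -/
structure IsEigenSystem (c₁ c₂ c₃ l : ℝ) (p p' q q' : ℝ → ℝ) : Prop where
  hasDerivAt_fst : ∀ᶠ x in atTop, HasDerivAt p (p' x) x
  hasDerivAt_fst' : ∀ᶠ x in atTop, HasDerivAt p' (p x - c₁ / x * p' x + 1 / x * q x) x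
  hasDerivAt_snd : ∀ᶠ x in atTop, HasDerivAt q (q' x) x
  hasDerivAt_snd' : ∀ᶠ x in atTop,
    HasDerivAt q' (q x - c₂ / x * q' x - c₃ / x ^ 2 * q x + l / x * p x) x

namespace IsEigenSystem

lemma neg (h : IsEigenSystem c₁ c₂ c₃ l p p' q q') :
    IsEigenSystem c₁ c₂ c₃ l (-p) (-p') (-q) (-q') where
  hasDerivAt_fst := h.hasDerivAt_fst.mono fun _ hx ↦ hx.neg
  hasDerivAt_fst' := h.hasDerivAt_fst'.mono fun _ hx ↦
    hx.neg.congr_deriv (by simp only [Pi.neg_apply]; ring)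
  hasDerivAt_snd := h.hasDerivAt_snd.mono fun _ hx ↦ hx.neg
  hasDerivAt_snd' := h.hasDerivAt_snd'.mono fun _ hx ↦
    hx.neg.congr_deriv (by simp only [Pi.neg_apply]; ring)

lemma not_eventually_le_snd (h : IsEigenSystem c₁ c₂ c₃ l p p' q q')
    (hP : ∀ᶠ x in atTop, HasDerivAt P (p x ^ 2) x) (hPC : ∀ᶠ x in atTop, P x ≤ C) :
    ¬ ∀ᶠ x in atTop, x ≤ q x := by
  intro hq
  refine false_of_add_one_le_of_sq_primitive_bounded (c := c₁) h.hasDerivAt_fst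
    h.hasDerivAt_fst' hP hPC ?_
  filter_upwards [hq, eventually_gt_atTop 0] with x hqx hx
  have : 1 ≤ 1 / x * q x := by rwa [one_div_mul_eq_div, one_le_div hx]
  linarith

end IsEigenSystem

lemma abs_two_mul_mul_mul_le {A : ℝ} (hA : |A| ≤ 1 / 8) (x y : ℝ) :
    |2 * (A * x * y)| ≤ (x ^ 2 + y ^ 2) / 8 := by
  rw [abs_mul, abs_mul, abs_mul, abs_two]
  nlinarith [mul_nonneg (abs_nonneg x) (abs_nonneg y), sq_abs x, sq_abs y, sq_nonneg (|x| - |y|)]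

lemma eventually_le_abs_of_sq_le (hq : ∀ᶠ x in atTop, ContinuousAt q x)
    (hsq : ∀ᶠ x in atTop, x ^ 2 ≤ q x ^ 2) :
    (∀ᶠ x in atTop, x ≤ q x) ∨ ∀ᶠ x in atTop, x ≤ -q x := by
  obtain ⟨a, ha⟩ := eventually_atTop.1 (hq.and (hsq.and (eventually_gt_atTop 0)))
  have hne : ∀ x ∈ Ici a, q x ≠ 0 := fun x hx h0 ↦ by
    nlinarith [(ha x hx).2.1, (ha x hx).2.2]
  have hcont : ContinuousOn q (Ici a) := fun x hx ↦ (ha x hx).1.continuousWithinAt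
  by_cases hsign : ∀ x ∈ Ici a, 0 ≤ q x
  · exact .inl <| (eventually_ge_atTop a).mono fun x hx ↦
      (abs_le_of_sq_le_sq' (ha x hx).2.1 (hsign x hx)).2
  · push Not at hsign
    obtain ⟨y, hy, hqy⟩ := hsign
    refine .inr <| (eventually_ge_atTop a).mono fun x hx ↦
      (abs_le_of_sq_le_sq' (by rw [neg_sq]; exact (ha x hx).2.1) (neg_nonneg.2 ?_)).2
    by_contra! hqx
    obtain ⟨z, hz, hqz⟩ := isPreconnected_Ici.intermediate_value hy hx hcont ⟨hqy.le, hqx.le⟩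
    exact hne z hz hqz

namespace IsEigenSystem

lemma hasDerivAt_sq_add_sq (h : IsEigenSystem c₁ c₂ c₃ l p p' q q') :
    ∀ᶠ x in atTop, HasDerivAt (fun x ↦ p x ^ 2 + q x ^ 2) (2 * (p x * p' x) + 2 * (q x * q' x)) x :=
    by
  filter_upwards [h.hasDerivAt_fst, h.hasDerivAt_snd] with x hp hq
  exact ((hp.pow 2).add (hq.pow 2)).congr_deriv (by ring)

lemma hasDerivAt_snd_mul_deriv (h : IsEigenSystem c₁ c₂ c₃ l p p' q q') :
    ∀ᶠ x in atTop, HasDerivAt (fun x ↦ 2 * (q x * q' x)) (2 * (q' x * q' x +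
      q x * (q x - c₂ / x * q' x - c₃ / x ^ 2 * q x + l / x * p x))) x := by
  filter_upwards [h.hasDerivAt_snd, h.hasDerivAt_snd'] with x hq hq'
  exact (hq.mul hq').const_mul 2

lemma snd_sq_sub_fst_sq_le (c₂ c₃ l : ℝ) (p q q' : ℝ → ℝ) :
    ∀ᶠ x in atTop, q x ^ 2 - p x ^ 2 ≤ 2 * (q' x * q' x +
      q x * (q x - c₂ / x * q' x - c₃ / x ^ 2 * q x + l / x * p x)) := by
  have hε : (0 : ℝ) < 1 / 8 := by norm_num
  filter_upwards [eventually_abs_const_div_le c₂ hε,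
    eventually_abs_const_div_pow_le c₃ two_ne_zero hε, eventually_abs_const_div_le l hε]
    with x h₂ h₃ hl
  have e₂ := abs_le.1 (abs_two_mul_mul_mul_le h₂ (q x) (q' x))
  have e₃ := abs_le.1 (abs_two_mul_mul_mul_le h₃ (q x) (q x))
  have e₄ := abs_le.1 (abs_two_mul_mul_mul_le hl (q x) (p x))
  nlinarith [sq_nonneg (p x), sq_nonneg (q x), sq_nonneg (q' x)]

lemma fst_sq_add_snd_sq_le (c₁ c₂ c₃ l : ℝ) (p p' q q' : ℝ → ℝ) :
    ∀ᶠ x in atTop, p x ^ 2 + q x ^ 2 ≤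
      2 * (p' x * p' x + p x * (p x - c₁ / x * p' x + 1 / x * q x)) +
      2 * (q' x * q' x + q x * (q x - c₂ / x * q' x - c₃ / x ^ 2 * q x + l / x * p x)) := by
  have hε : (0 : ℝ) < 1 / 8 := by norm_num
  filter_upwards [eventually_abs_const_div_le c₁ hε, eventually_abs_const_div_le c₂ hε,
    eventually_abs_const_div_pow_le c₃ two_ne_zero hε, eventually_abs_const_div_le l hε,
    eventually_abs_const_div_le 1 hε] with x h₁ h₂ h₃ hl h₀
  have e₀ := abs_le.1 (abs_two_mul_mul_mul_le h₀ (p x) (q x))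
  have e₁ := abs_le.1 (abs_two_mul_mul_mul_le h₁ (p x) (p' x))
  have e₂ := abs_le.1 (abs_two_mul_mul_mul_le h₂ (q x) (q' x))
  have e₃ := abs_le.1 (abs_two_mul_mul_mul_le h₃ (q x) (q x))
  have e₄ := abs_le.1 (abs_two_mul_mul_mul_le hl (q x) (p x))
  nlinarith [sq_nonneg (p x), sq_nonneg (q x), sq_nonneg (p' x), sq_nonneg (q' x)]

-- Otherwise `(q ^ 2)'' + 2 * p ^ 2` is eventually large, hence `|q| ≥ x`, and the equation for `p`
-- forces growth.
lemma not_tendsto_sq_add_sq (h : IsEigenSystem c₁ c₂ c₃ l p p' q q')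
    (hP : ∀ᶠ x in atTop, HasDerivAt P (p x ^ 2) x) (hPC : ∀ᶠ x in atTop, P x ≤ C) :
    ¬ Tendsto (fun x ↦ p x ^ 2 + q x ^ 2) atTop atTop := by
  intro hN
  have hflux : Tendsto (fun x ↦ 2 * (q x * q' x) - 4 * x + 2 * P x) atTop atTop := by
    refine tendsto_atTop_of_eventually_le_deriv one_pos ?_ ?_ (f' := fun x ↦
      2 * (q' x * q' x + q x * (q x - c₂ / x * q' x - c₃ / x ^ 2 * q x + l / x * p x))
        - 4 * 1 + 2 * p x ^ 2)
    · filter_upwards [h.hasDerivAt_snd_mul_deriv, hP] with x hq hP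
      exact (hq.sub ((hasDerivAt_id x).const_mul 4)).add (hP.const_mul 2)
    · filter_upwards [snd_sq_sub_fst_sq_le c₂ c₃ l p q q', hN.eventually_ge_atTop 5] with x h₁ h₂
      linarith
  have hsq : Tendsto (fun x ↦ q x ^ 2 - x ^ 2) atTop atTop := by
    refine tendsto_atTop_of_eventually_le_deriv one_pos ?_ ?_
      (f' := fun x ↦ 2 * (q x * q' x) - 2 * x)
    · filter_upwards [h.hasDerivAt_snd] with x hq
      exact ((hq.pow 2).sub (hasDerivAt_pow 2 x)).congr_deriv (by ring)
    · filter_upwards [(tendsto_atTop_of_tendsto_add hflux (C := 2 * C)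
        (hPC.mono fun x hx ↦ by linarith)).eventually_ge_atTop 0, eventually_ge_atTop 1]
        with x h₁ h₂
      linarith
  rcases eventually_le_abs_of_sq_le (h.hasDerivAt_snd.mono fun _ hx ↦ hx.continuousAt)
    ((hsq.eventually_ge_atTop 0).mono fun _ hx ↦ sub_nonneg.1 hx) with hq | hq
  · exact h.not_eventually_le_snd hP hPC hq
  · exact h.neg.not_eventually_le_snd (by simpa using hP) hPC hq

lemma isBigO_exp_neg_half (h : IsEigenSystem c₁ c₂ c₃ l p p' q q')
    (hP : ∀ᶠ x in atTop, HasDerivAt P (p x ^ 2) x) (hPC : ∀ᶠ x in atTop, P x ≤ C) :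
    p =O[atTop] fun x ↦ exp (-x / 2) := by
  have hN'' : ∀ᶠ x in atTop, HasDerivAt (fun x ↦ 2 * (p x * p' x) + 2 * (q x * q' x))
      (2 * (p' x * p' x + p x * (p x - c₁ / x * p' x + 1 / x * q x)) +
      2 * (q' x * q' x + q x * (q x - c₂ / x * q' x - c₃ / x ^ 2 * q x + l / x * p x))) x := by
    filter_upwards [h.hasDerivAt_fst, h.hasDerivAt_fst', h.hasDerivAt_snd_mul_deriv]
      with x hp hp' hq
    exact ((hp.mul hp').const_mul 2).add hq
  rcases isBigO_exp_neg_or_eventually_le_deriv (fun x ↦ by positivity) h.hasDerivAt_sq_add_sq hN''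
    (fst_sq_add_snd_sq_le c₁ c₂ c₃ l p p' q q') with hdecay | ⟨d, hd, hgrow⟩
  · refine IsBigO.of_pow two_ne_zero (IsBigO.trans (IsBigO.of_bound 1 (.of_forall fun x ↦ ?_))
      (hdecay.congr_right fun x ↦ ?_))
    · simp only [Pi.pow_apply, norm_pow, norm_eq_abs, sq_abs, one_mul]
      exact le_abs.2 (.inl (by nlinarith [sq_nonneg (q x)]))
    · rw [Pi.pow_apply, ← exp_nat_mul]; ring_nf
  · exact (h.not_tendsto_sq_add_sq hP hPC
      (tendsto_atTop_of_eventually_le_deriv hd h.hasDerivAt_sq_add_sq hgrow)).elim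

end IsEigenSystem

lemma exists_bounded_primitive {a : ℝ} (hf : ContinuousOn f (Ici a)) (h₀ : ∀ x, 0 ≤ f x)
    (h_int : IntegrableOn f (Ioi a)) :
    ∃ F : ℝ → ℝ, ∃ C, (∀ x > a, HasDerivAt F (f x) x) ∧ ∀ x > a, F x ≤ C := by
  refine ⟨fun x ↦ ∫ y in a..x, f y, ∫ y in Ioi a, f y, fun x hx ↦ ?_, fun x hx ↦ ?_⟩
  · have hsub : uIcc a x ⊆ Ici a := uIcc_of_le (le_of_lt hx) ▸ Icc_subset_Ici_self
    have hnhds : Ici a ∈ 𝓝 x := Ici_mem_nhds hx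
    exact intervalIntegral.integral_hasDerivAt_right (hf.mono hsub).intervalIntegrable
      (hf.mono Ioi_subset_Ici_self |>.stronglyMeasurableAtFilter isOpen_Ioi x hx)
      (hf.continuousAt hnhds)
  · simp only [intervalIntegral.integral_of_le (le_of_lt hx)]
    exact setIntegral_mono_set h_int (ae_of_all _ h₀) Ioc_subset_Ioi_self.eventuallyLE

end Decay

section EulerOperator

variable {v : ℝ → ℝ} {x : ℝ}

lemma contDiffOn_eulerOp (hv : ContDiffOn ℝ (⊤ : ℕ∞) v (Ioi 0)) :
    ContDiffOn ℝ (⊤ : ℕ∞) (eulerOp v) (Ioi 0) :=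
  contDiffOn_id.mul (hv.deriv_of_isOpen (m := (⊤ : ℕ∞)) isOpen_Ioi (by simp))

lemma hasDerivAt_eulerOp_div (hv : ContDiffOn ℝ (⊤ : ℕ∞) v (Ioi 0)) (hx : 0 < x) :
    HasDerivAt v (eulerOp v x / x) x := by
  have h := ((hv.differentiableOn (by simp)).differentiableAt (Ioi_mem_nhds hx)).hasDerivAt
  exact h.congr_deriv (mul_div_cancel_left₀ _ hx.ne').symm

lemma hasDerivAt_comp_exp (hv : ContDiffOn ℝ (⊤ : ℕ∞) v (Ioi 0)) (t : ℝ) :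
    HasDerivAt (fun t ↦ v (exp t)) (eulerOp v (exp t)) t :=
  ((hasDerivAt_eulerOp_div hv (exp_pos t)).comp t (hasDerivAt_exp t)).congr_deriv
    (div_mul_cancel₀ _ (exp_pos t).ne')

lemma eulerOp_add_const_mul (hv : ContDiffOn ℝ (⊤ : ℕ∞) v (Ioi 0)) (c : ℝ) (hx : 0 < x) :
    eulerOp (fun y ↦ eulerOp v y + c * v y) x = eulerOp (eulerOp v) x + c * eulerOp v x := by
  have h := (hasDerivAt_eulerOp_div (contDiffOn_eulerOp hv) hx).add
    ((hasDerivAt_eulerOp_div hv hx).const_mul c)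
  calc eulerOp (fun y ↦ eulerOp v y + c * v y) x
      = x * (eulerOp (eulerOp v) x / x + c * (eulerOp v x / x)) := congrArg (x * ·) h.deriv
    _ = eulerOp (eulerOp v) x + c * eulerOp v x := by field_simp

lemma besselQ_eq_eulerOp (hv : ContDiffOn ℝ (⊤ : ℕ∞) v (Ioi 0)) (ν c : ℝ) (hx : 0 < x) :
    besselQ ν c v x = eulerOp (eulerOp v) x + (2 * c + ν) * eulerOp v x + c * (c + ν) * v x
      - x ^ 2 * v x := by
  rw [besselQ, eulerOp_add_const_mul hv _ hx]
  ring

lemma contDiffOn_besselQ (hv : ContDiffOn ℝ (⊤ : ℕ∞) v (Ioi 0)) (ν c : ℝ) :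
    ContDiffOn ℝ (⊤ : ℕ∞) (besselQ ν c v) (Ioi 0) := by
  have h₁ := contDiffOn_eulerOp hv
  have h₂ := contDiffOn_eulerOp h₁
  have h : ContDiffOn ℝ (⊤ : ℕ∞) (fun x ↦ eulerOp (eulerOp v) x + (2 * c + ν) * eulerOp v x
      + c * (c + ν) * v x - x ^ 2 * v x) (Ioi 0) := by fun_prop
  exact h.congr fun x hx ↦ besselQ_eq_eulerOp hv ν c hx

end EulerOperator

/-- A smooth solution of `D_{μ,ν} u = l u` on the positive half-line. -/
structure IsEigenfunction (μ ν l : ℝ) (u : ℝ → ℝ) : Prop where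
  contDiffOn : ContDiffOn ℝ (⊤ : ℕ∞) u (Ioi 0)
  dop_eq : ∀ x > 0, Dop μ ν u x = l * u x

namespace IsEigenfunction

variable {μ ν l : ℝ} {u : ℝ → ℝ}

lemma eulerOp_besselQ (h : IsEigenfunction μ ν l u) {x : ℝ} (hx : 0 < x) :
    eulerOp (eulerOp (besselQ ν 0 u)) x + (2 * μ + ν) * eulerOp (besselQ ν 0 u) x
      + μ * (μ + ν) * besselQ ν 0 u x - x ^ 2 * besselQ ν 0 u x = l * x ^ 2 * u x := by
  have hx' := h.dop_eq x hx
  rw [Dop, besselQ_eq_eulerOp (contDiffOn_besselQ h.contDiffOn ν 0) ν μ hx,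
    div_eq_iff (by positivity)] at hx'
  linarith

lemma isEigenSystem (h : IsEigenfunction μ ν l u) :
    IsEigenSystem (ν + 1) (2 * μ + ν + 3) (2 * μ + ν + 1 + μ * (μ + ν)) l u
      (fun x ↦ eulerOp u x / x) (fun x ↦ besselQ ν 0 u x / x)
      (fun x ↦ (eulerOp (besselQ ν 0 u) x - besselQ ν 0 u x) / x ^ 2) where
  hasDerivAt_fst := (eventually_gt_atTop 0).mono fun x hx ↦ hasDerivAt_eulerOp_div h.contDiffOn hx
  hasDerivAt_fst' := (eventually_gt_atTop 0).mono fun x hx ↦ by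
    refine ((hasDerivAt_eulerOp_div (contDiffOn_eulerOp h.contDiffOn) hx).div (hasDerivAt_id x)
      hx.ne').congr_deriv ?_
    simp only [besselQ_eq_eulerOp h.contDiffOn ν 0 hx, id]
    field_simp
    ring
  hasDerivAt_snd := (eventually_gt_atTop 0).mono fun x hx ↦ by
    refine ((hasDerivAt_eulerOp_div (contDiffOn_besselQ h.contDiffOn ν 0) hx).div
      (hasDerivAt_id x) hx.ne').congr_deriv ?_
    simp only [id]
    field_simp
  hasDerivAt_snd' := (eventually_gt_atTop 0).mono fun x hx ↦ by
    have hh := contDiffOn_besselQ h.contDiffOn ν 0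
    refine (((hasDerivAt_eulerOp_div (contDiffOn_eulerOp hh) hx).sub
      (hasDerivAt_eulerOp_div hh hx)).div ((hasDerivAt_id x).pow 2)
      (pow_ne_zero 2 hx.ne')).congr_deriv ?_
    simp only [id, Pi.sub_apply, Pi.pow_apply]
    field_simp
    push_cast
    linear_combination x * h.eulerOp_besselQ hx

lemma isBigO_exp_neg_half (h : IsEigenfunction μ ν l u) (hμν : 0 ≤ μ + ν + 1)
    (hL : IntegrableOn (fun x ↦ u x ^ 2 * x ^ (μ + ν + 1)) (Ioi 0)) :
    u =O[atTop] fun x ↦ exp (-x / 2) := by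
  have hcont : ContinuousOn (fun x ↦ u x ^ 2) (Ici 1) :=
    (h.contDiffOn.continuousOn.mono (Ici_subset_Ioi.2 one_pos)).pow 2
  have h_int : IntegrableOn (fun x ↦ u x ^ 2) (Ioi 1) := by
    refine Integrable.mono' (hL.mono_set (Ioi_subset_Ioi zero_le_one))
      ((hcont.mono Ioi_subset_Ici_self).aestronglyMeasurable measurableSet_Ioi) ?_
    refine (ae_restrict_iff' measurableSet_Ioi).2 (ae_of_all _ fun x hx ↦ ?_)
    rw [norm_of_nonneg (sq_nonneg _)]
    exact le_mul_of_one_le_right (sq_nonneg _) (one_le_rpow (le_of_lt hx) hμν)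
  obtain ⟨P, C, hP, hPC⟩ := exists_bounded_primitive hcont (fun x ↦ sq_nonneg (u x)) h_int
  exact h.isEigenSystem.isBigO_exp_neg_half ((eventually_gt_atTop 1).mono hP)
    ((eventually_gt_atTop 1).mono hPC)

end IsEigenfunction

lemma exists_abs_le_of_continuousOn_Ioi {f : ℝ → ℝ} {a c : ℝ} (hf : ContinuousOn f (Ioi a))
    (ha : Tendsto f (𝓝[>] a) (𝓝 c)) (htop : f =O[atTop] fun _ ↦ (1 : ℝ)) :
    ∃ C, ∀ x > a, |f x| ≤ C := by
  obtain ⟨C₁, hC₁⟩ := htop.bound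
  obtain ⟨Y, hY⟩ := eventually_atTop.1 hC₁
  have hnear : ∀ᶠ x in 𝓝[>] a, |f x| < |c| + 1 :=
    ha.abs.eventually (gt_mem_nhds (lt_add_one _))
  obtain ⟨δ, hδ, hnear⟩ := mem_nhdsGT_iff_exists_Ioo_subset.1 hnear
  obtain ⟨C₂, hC₂⟩ := isCompact_Icc.exists_bound_of_continuousOn
    (hf.mono fun x (hx : x ∈ Icc δ Y) ↦ lt_of_lt_of_le hδ hx.1)
  refine ⟨max (|c| + 1) (max C₁ C₂), fun x hx ↦ ?_⟩
  rcases lt_or_ge x δ with hxδ | hxδ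
  · exact le_max_of_le_left (hnear ⟨hx, hxδ⟩).le
  rcases le_or_gt x Y with hxY | hxY
  · exact le_max_of_le_right (le_max_of_le_right (hC₂ x ⟨hxδ, hxY⟩))
  · exact le_max_of_le_right (le_max_of_le_left (by simpa using hY x hxY.le))

lemma exists_abs_le_rpow_mul_exp {u : ℝ → ℝ} {ν B : ℝ} (hu : ContinuousOn u (Ioi 0))
    (hdecay : u =O[atTop] fun x ↦ exp (-x / 2))
    (hB : Tendsto (fun x ↦ x ^ ν * u x) (𝓝[>] 0) (𝓝 B)) :
    ∃ C, ∀ x > 0, |u x| ≤ C * (x ^ (-ν) * exp (-x / 4)) := by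
  have hcont : ContinuousOn (fun x ↦ x ^ ν * u x * exp (x / 4)) (Ioi 0) := by
    refine (ContinuousOn.mul (fun x hx ↦ ?_) hu).mul (by fun_prop)
    exact (continuousAt_rpow_const x ν (Or.inl (ne_of_gt hx))).continuousWithinAt
  have hzero : Tendsto (fun x ↦ x ^ ν * u x * exp (x / 4)) (𝓝[>] 0) (𝓝 (B * exp (0 / 4))) :=
    hB.mul (tendsto_nhdsWithin_of_tendsto_nhds
      ((by fun_prop : Continuous fun x : ℝ ↦ exp (x / 4)).tendsto 0))
  have htop : (fun x ↦ x ^ ν * u x * exp (x / 4)) =O[atTop] fun _ ↦ (1 : ℝ) := by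
    have h := ((isBigO_refl (fun x : ℝ ↦ x ^ ν) atTop).mul hdecay).mul
      (isBigO_refl (fun x : ℝ ↦ exp (x / 4)) atTop)
    refine (h.congr_right (g₂ := fun x ↦ x ^ ν * exp (-(1 / 4) * x)) fun x ↦ ?_).trans
      ((tendsto_rpow_mul_exp_neg_mul_atTop_nhds_zero ν (1 / 4) (by norm_num)).isBigO_one ℝ)
    rw [mul_assoc, ← exp_add]
    ring_nf
  obtain ⟨C, hC⟩ := exists_abs_le_of_continuousOn_Ioi hcont hzero htop
  refine ⟨C, fun x hx ↦ ?_⟩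
  have hscale : u x = x ^ ν * u x * exp (x / 4) * (x ^ (-ν) * exp (-x / 4)) := by
    rw [rpow_neg hx.le, neg_div, exp_neg]
    field_simp
  rw [hscale, abs_mul, abs_of_pos (mul_pos (rpow_pos_of_pos hx _) (exp_pos (-x / 4)))]
  exact mul_le_mul_of_nonneg_right (hC x hx) (by positivity)

/-! ### Weak form of the eigenvalue equation -/

section WeakForm

/-- A continuous function whose integral against the dilated test function `ψ (ε t)` is `o(ε⁻¹)` as
`ε → 0`, for every `ψ`. Integrable functions have this property and, unlike integrability, it is
inherited by derivatives, which is what the boundary terms in Green's formula need. -/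
structure IsNegligible (w : ℝ → ℝ) : Prop where
  continuous : Continuous w
  tendsto_integral : ∀ ψ : ℝ → ℝ, ContDiff ℝ (⊤ : ℕ∞) ψ → HasCompactSupport ψ →
    Tendsto (fun ε ↦ ε * ∫ t, w t * ψ (ε * t)) (𝓝[>] 0) (𝓝 0)

variable {v w w' ψ : ℝ → ℝ} {ε : ℝ}

lemma integrable_mul_comp_const_mul (hw : Continuous w) (hψ : Continuous ψ)
    (hsupp : HasCompactSupport ψ) (hε : ε ≠ 0) : Integrable fun t ↦ w t * ψ (ε * t) :=
  (hw.mul (hψ.comp (continuous_const_mul ε))).integrable_of_hasCompactSupport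
    (hsupp.comp_smul hε).mul_left

lemma integral_deriv_mul_comp_const_mul (hw : ∀ t, HasDerivAt w (w' t) t) (hw' : Continuous w')
    (hψ : ContDiff ℝ (⊤ : ℕ∞) ψ) (hsupp : HasCompactSupport ψ) (hε : ε ≠ 0) :
    ∫ t, w' t * ψ (ε * t) = -(ε * ∫ t, w t * deriv ψ (ε * t)) := by
  have hwc : Continuous w := continuous_iff_continuousAt.2 fun t ↦ (hw t).continuousAt
  have hψ' (t : ℝ) : HasDerivAt (fun t ↦ ψ (ε * t)) (deriv ψ (ε * t) * ε) t :=
    ((hψ.differentiable (by simp) _).hasDerivAt.comp t ((hasDerivAt_id t).const_mul ε)).congr_deriv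
      (by simp)
  have h_int := (integrable_mul_comp_const_mul hwc (hψ.continuous_deriv (by simp))
    hsupp.deriv hε).mul_const ε
  have hparts := integral_mul_deriv_eq_deriv_mul_of_integrable (fun t _ ↦ hw t)
    (fun t _ ↦ hψ' t)
    (h_int.congr (.of_forall fun t ↦ mul_assoc _ _ _))
    (integrable_mul_comp_const_mul hw' hψ.continuous hsupp hε)
    (integrable_mul_comp_const_mul hwc hψ.continuous hsupp hε)
  simp only [← mul_assoc, integral_mul_const] at hparts
  linarith

namespace IsNegligible

lemma of_integrable (hcont : Continuous w) (h_int : Integrable w) : IsNegligible w where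
  continuous := hcont
  tendsto_integral ψ hψ hsupp := by
    obtain ⟨M, hM⟩ := hsupp.exists_bound_of_continuous hψ.continuous
    have hbound (ε : ℝ) : ‖∫ t, w t * ψ (ε * t)‖ ≤ ∫ t, ‖w t‖ * M :=
      norm_integral_le_of_norm_le (h_int.norm.mul_const M) (ae_of_all _ fun t ↦ by
        rw [norm_mul]; exact mul_le_mul_of_nonneg_left (hM _) (norm_nonneg _))
    exact (tendsto_nhdsWithin_of_tendsto_nhds tendsto_id).zero_mul_isBoundedUnder_le
      (isBoundedUnder_of ⟨_, hbound⟩)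

lemma add (hv : IsNegligible v) (hw : IsNegligible w) : IsNegligible fun t ↦ v t + w t where
  continuous := hv.continuous.add hw.continuous
  tendsto_integral ψ hψ hsupp := by
    have h := (hv.tendsto_integral ψ hψ hsupp).add (hw.tendsto_integral ψ hψ hsupp)
    rw [add_zero] at h
    refine h.congr' (eventually_mem_nhdsWithin.mono fun ε (hε : 0 < ε) ↦ ?_)
    rw [← mul_add, ← integral_add
      (integrable_mul_comp_const_mul hv.continuous hψ.continuous hsupp hε.ne')
      (integrable_mul_comp_const_mul hw.continuous hψ.continuous hsupp hε.ne')]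
    simp only [add_mul]

lemma const_mul (hw : IsNegligible w) (c : ℝ) : IsNegligible fun t ↦ c * w t where
  continuous := hw.continuous.const_mul c
  tendsto_integral ψ hψ hsupp := by
    have h := (hw.tendsto_integral ψ hψ hsupp).const_mul c
    rw [mul_zero] at h
    refine h.congr fun ε ↦ ?_
    simp only [mul_assoc, integral_const_mul]
    ring

lemma sub (hv : IsNegligible v) (hw : IsNegligible w) : IsNegligible fun t ↦ v t - w t := by
  simpa only [neg_one_mul, ← sub_eq_add_neg] using hv.add (hw.const_mul (-1))

lemma of_hasDerivAt (hw : IsNegligible w) (h : ∀ t, HasDerivAt w (w' t) t) (hw' : Continuous w') :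
    IsNegligible w' where
  continuous := hw'
  tendsto_integral ψ hψ hsupp := by
    have hlim := (tendsto_nhdsWithin_of_tendsto_nhds tendsto_id).mul
      (hw.tendsto_integral (deriv ψ) (hψ.deriv') hsupp.deriv).neg
    rw [neg_zero, mul_zero] at hlim
    refine hlim.congr' (eventually_mem_nhdsWithin.mono fun ε (hε : 0 < ε) ↦ ?_)
    simp only [integral_deriv_mul_comp_const_mul h hw' hψ hsupp hε.ne', id]

lemma integral_deriv_eq_zero (hw : IsNegligible w) (h : ∀ t, HasDerivAt w (w' t) t)
    (hcont : Continuous w') (h_int : Integrable w') : ∫ t, w' t = 0 := by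
  let η : ContDiffBump (0 : ℝ) := ⟨1, 2, one_pos, one_lt_two⟩
  have hzero : Tendsto (fun ε ↦ ∫ t, w' t * η (ε * t)) (𝓝[>] 0) (𝓝 0) := by
    have hlim := (hw.tendsto_integral (deriv η) (η.contDiff (n := (⊤ : ℕ∞))).deriv'
      η.hasCompactSupport.deriv).neg
    rw [neg_zero] at hlim
    refine hlim.congr' (eventually_mem_nhdsWithin.mono fun ε (hε : 0 < ε) ↦ ?_)
    simp only [integral_deriv_mul_comp_const_mul h hcont η.contDiff η.hasCompactSupport hε.ne']
  have hfull : Tendsto (fun ε ↦ ∫ t, w' t * η (ε * t)) (𝓝[>] 0) (𝓝 (∫ t, w' t)) := by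
    refine tendsto_integral_filter_of_dominated_convergence (fun t ↦ ‖w' t‖)
      (.of_forall fun ε ↦ (hcont.mul (η.continuous.comp (continuous_const_mul ε)))
        |>.aestronglyMeasurable) (.of_forall fun ε ↦ ae_of_all _ fun t ↦ ?_) h_int.norm
      (ae_of_all _ fun t ↦ tendsto_nhdsWithin_of_tendsto_nhds ?_)
    · rw [norm_mul, norm_of_nonneg η.nonneg]
      exact mul_le_of_le_one_right (norm_nonneg _) η.le_one
    · have hη := ((η.continuous.comp (continuous_mul_const t)).const_mul (w' t)).tendsto 0
      rwa [Function.comp_apply, zero_mul, η.one_of_mem_closedBall (by simp [η]), mul_one] at hη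
  exact tendsto_nhds_unique hfull hzero

end IsNegligible

/-- A space of test functions on the logarithmic scale, stable under differentiation and under
multiplication by `e^{2t}`. -/
structure IsTestSpace (S : Submodule ℝ (ℝ → ℝ)) : Prop where
  differentiable : ∀ F ∈ S, Differentiable ℝ F
  deriv_mem : ∀ F ∈ S, deriv F ∈ S
  exp_mul_mem : ∀ F ∈ S, (fun t ↦ exp (2 * t) * F t) ∈ S

/-- The formal adjoint of `∂² + c₁ ∂ + c₀ - e^{2t}`. -/
noncomputable def logAdjoint (c₁ c₀ : ℝ) (F : ℝ → ℝ) : ℝ → ℝ := fun t ↦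
  deriv (deriv F) t - c₁ * deriv F t + (c₀ - exp (2 * t)) * F t

variable {S : Submodule ℝ (ℝ → ℝ)} {V V' V'' K A F : ℝ → ℝ} {c₀ c₁ d₀ d₁ l : ℝ}

namespace IsTestSpace

lemma logAdjoint_mem (hS : IsTestSpace S) (hF : F ∈ S) : logAdjoint c₁ c₀ F ∈ S := by
  have h₁ := hS.deriv_mem F hF
  have h := S.add_mem (S.sub_mem (hS.deriv_mem _ h₁) (S.smul_mem c₁ h₁))
    (S.sub_mem (S.smul_mem c₀ hF) (hS.exp_mul_mem F hF))
  convert h using 1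
  ext t
  simp only [logAdjoint, Pi.add_apply, Pi.sub_apply, Pi.smul_apply, smul_eq_mul, sub_mul]

lemma hasDerivAt (hS : IsTestSpace S) (hF : F ∈ S) (t : ℝ) : HasDerivAt F (deriv F t) t :=
  (hS.differentiable F hF t).hasDerivAt

lemma isNegligible_deriv_mul (hS : IsTestSpace S)
    (hV : ∀ F ∈ S, IsNegligible fun t ↦ V t * F t) (hV' : ∀ t, HasDerivAt V (V' t) t)
    (hcont : Continuous V') : ∀ F ∈ S, IsNegligible fun t ↦ V' t * F t := by
  intro F hF
  have hF' := hS.deriv_mem F hF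
  have hcont' : Continuous fun t ↦ V' t * F t + V t * deriv F t :=
    (hcont.mul (hS.differentiable F hF).continuous).add (hV _ hF').continuous
  simpa only [add_sub_cancel_right] using
    ((hV F hF).of_hasDerivAt (fun t ↦ (hV' t).mul (hS.hasDerivAt hF t)) hcont').sub (hV _ hF')

lemma isNegligible_green (hS : IsTestSpace S) (hV : ∀ F ∈ S, IsNegligible fun t ↦ V t * F t)
    (hV' : ∀ F ∈ S, IsNegligible fun t ↦ V' t * F t) (hF : F ∈ S) (c₁ : ℝ) :
    IsNegligible fun t ↦ V t * deriv F t - V' t * F t - c₁ * (V t * F t) :=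
  ((hV _ (hS.deriv_mem F hF)).sub (hV' F hF)).sub ((hV F hF).const_mul c₁)

lemma hasDerivAt_green (hS : IsTestSpace S) (hV : ∀ t, HasDerivAt V (V' t) t)
    (hV' : ∀ t, HasDerivAt V' (V'' t) t)
    (hK : ∀ t, K t = V'' t + c₁ * V' t + c₀ * V t - exp (2 * t) * V t) (hF : F ∈ S) (t : ℝ) :
    HasDerivAt (fun t ↦ V t * deriv F t - V' t * F t - c₁ * (V t * F t))
      (V t * logAdjoint c₁ c₀ F t - K t * F t) t := by
  have hF' := hS.hasDerivAt hF t
  refine ((((hV t).mul (hS.hasDerivAt (hS.deriv_mem F hF) t)).sub ((hV' t).mul hF')).sub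
    (((hV t).mul hF').const_mul c₁)).congr_deriv ?_
  rw [hK, logAdjoint]
  ring

end IsTestSpace

lemma integral_mul_logAdjoint_eq_zero (hS : IsTestSpace S) {U U' U'' H H' H'' : ℝ → ℝ}
    (h_int : ∀ F ∈ S, Integrable fun t ↦ U t * F t)
    (hU : ∀ t, HasDerivAt U (U' t) t) (hU' : ∀ t, HasDerivAt U' (U'' t) t)
    (hHU : ∀ t, H t = U'' t + d₁ * U' t + d₀ * U t - exp (2 * t) * U t)
    (hH : ∀ t, HasDerivAt H (H' t) t) (hH' : ∀ t, HasDerivAt H' (H'' t) t)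
    (heq : ∀ t, l * exp (2 * t) * U t = H'' t + c₁ * H' t + c₀ * H t - exp (2 * t) * H t)
    (hA : A ∈ S) :
    ∫ t, U t * (logAdjoint d₁ d₀ (logAdjoint c₁ c₀ A) t - l * exp (2 * t) * A t) = 0 := by
  have continuous_of {f f' : ℝ → ℝ} (h : ∀ t, HasDerivAt f (f' t) t) : Continuous f :=
    continuous_iff_continuousAt.2 fun t ↦ (h t).continuousAt
  have hUc := continuous_of hU
  have hU'c := continuous_of hU'
  have hHc := continuous_of hH
  have hU''c : Continuous U'' := by
    have h : Continuous fun t ↦ H t - d₁ * U' t - d₀ * U t + exp (2 * t) * U t := by fun_prop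
    exact h.congr fun t ↦ by rw [hHU]; ring
  have nU : ∀ F ∈ S, IsNegligible fun t ↦ U t * F t := fun F hF ↦
    .of_integrable (hUc.mul (hS.differentiable F hF).continuous) (h_int F hF)
  have nU' := hS.isNegligible_deriv_mul nU hU hU'c
  have nU'' := hS.isNegligible_deriv_mul nU' hU' hU''c
  have nH : ∀ F ∈ S, IsNegligible fun t ↦ H t * F t := fun F hF ↦ by
    convert (((nU'' F hF).add ((nU' F hF).const_mul d₁)).add ((nU F hF).const_mul d₀)).sub
      (nU _ (hS.exp_mul_mem F hF)) using 2
    rw [hHU]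
    ring
  have nH' := hS.isNegligible_deriv_mul nH hH (continuous_of hH')
  have hE : logAdjoint c₁ c₀ A ∈ S := hS.logAdjoint_mem hA
  have hG : (fun t ↦ logAdjoint d₁ d₀ (logAdjoint c₁ c₀ A) t - l * exp (2 * t) * A t) ∈ S := by
    convert S.sub_mem (hS.logAdjoint_mem (c₁ := d₁) (c₀ := d₀) hE)
      (S.smul_mem l (hS.exp_mul_mem A hA)) using 1
    ext t
    simp only [Pi.sub_apply, Pi.smul_apply, smul_eq_mul, mul_assoc]
  refine ((hS.isNegligible_green nU nU' hE d₁).add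
    (hS.isNegligible_green nH nH' hA c₁)).integral_deriv_eq_zero (fun t ↦ ?_)
    (nU _ hG).continuous (h_int _ hG)
  refine ((hS.hasDerivAt_green hU hU' hHU hE t).add
    (hS.hasDerivAt_green hH hH' heq hA t)).congr_deriv ?_
  ring

end WeakForm

/-! ### Moments against products of Bessel functions -/

section BesselSeries

/-- The coefficient of `(x / 2) ^ (2 * m)` in `besselJt α x`. -/
noncomputable def besselCoeff (α : ℝ) (m : ℕ) : ℝ := (-1) ^ m / (m.factorial * Gamma (m + α + 1))

variable {α : ℝ}

lemma add_mul_besselCoeff_add_one (hα : 0 ≤ α) (m : ℕ) :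
    (m + α + 1) * besselCoeff (α + 1) m = besselCoeff α m := by
  have hΓ : Gamma (m + (α + 1) + 1) = (m + α + 1) * Gamma (m + α + 1) := by
    rw [← Gamma_add_one (by positivity)]
    ring_nf
  have : Gamma (m + α + 1) ≠ 0 := (Gamma_pos_of_pos (by positivity)).ne'
  rw [besselCoeff, besselCoeff, hΓ]
  field_simp

lemma add_one_mul_besselCoeff_succ (α : ℝ) (m : ℕ) :
    (m + 1) * besselCoeff α (m + 1) = -besselCoeff (α + 1) m := by
  have hΓ : ((m + 1 : ℕ) : ℝ) + α + 1 = m + (α + 1) + 1 := by push_cast; ring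
  rw [besselCoeff, besselCoeff, hΓ, Nat.factorial_succ, pow_succ]
  push_cast
  rw [mul_neg_one, neg_div, mul_neg, mul_assoc, ← mul_div_assoc,
    mul_div_mul_left _ _ (by positivity)]

lemma Gamma_add_one_le_Gamma_nat_add (hα : 0 ≤ α) (m : ℕ) :
    Gamma (α + 1) ≤ Gamma (m + α + 1) := by
  induction m with
  | zero => simp
  | succ m ih =>
    have hΓ : Gamma ((m + 1 : ℕ) + α + 1) = (m + α + 1) * Gamma (m + α + 1) := by
      rw [← Gamma_add_one (by positivity)]
      push_cast
      ring_nf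
    rw [hΓ]
    exact ih.trans (le_mul_of_one_le_left (Gamma_pos_of_pos (by positivity)).le
      (le_add_of_nonneg_left (by positivity)))

lemma norm_besselCoeff_le (hα : 0 ≤ α) (m : ℕ) :
    ‖besselCoeff α m‖ ≤ 1 / Gamma (α + 1) * (1 / m.factorial) := by
  have hpos : 0 < Gamma (α + 1) := Gamma_pos_of_pos (by positivity)
  have hle := Gamma_add_one_le_Gamma_nat_add hα m
  rw [besselCoeff, norm_div, norm_pow, norm_neg, norm_one, one_pow,
    norm_of_nonneg (mul_nonneg (by positivity) (hpos.trans_le hle).le), div_mul_div_comm, one_mul,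
    mul_comm]
  gcongr

lemma summable_besselCoeff_mul_pow (hα : 0 ≤ α) (x : ℝ) :
    Summable fun m : ℕ ↦ besselCoeff α m * (x / 2) ^ (2 * m) := by
  refine .of_norm_bounded
    ((summable_pow_div_factorial ((x / 2) ^ 2)).mul_left (1 / Gamma (α + 1))) fun m ↦ ?_
  calc ‖besselCoeff α m * (x / 2) ^ (2 * m)‖
      = ‖besselCoeff α m‖ * ((x / 2) ^ 2) ^ m := by
        rw [norm_mul, pow_mul, norm_of_nonneg (by positivity : (0 : ℝ) ≤ ((x / 2) ^ 2) ^ m)]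
    _ ≤ 1 / Gamma (α + 1) * (1 / m.factorial) * ((x / 2) ^ 2) ^ m := by
        gcongr
        exact norm_besselCoeff_le hα m
    _ = 1 / Gamma (α + 1) * (((x / 2) ^ 2) ^ m / m.factorial) := by ring

lemma hasSum_besselJt (hα : 0 ≤ α) (x : ℝ) :
    HasSum (fun m : ℕ ↦ besselCoeff α m * (x / 2) ^ (2 * m)) (besselJt α x) :=
  (summable_besselCoeff_mul_pow hα x).hasSum

lemma besselJt_add_two (hα : 0 ≤ α) (x : ℝ) :
    x ^ 2 / 4 * besselJt (α + 2) x = (α + 1) * besselJt (α + 1) x - besselJt α x := by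
  have hright := (((hasSum_besselJt (by positivity : 0 ≤ α + 1) x).mul_left (α + 1)).sub
    (hasSum_besselJt hα x))
  rw [← hasSum_nat_add_iff' 1] at hright
  have hzero : (α + 1) * besselCoeff (α + 1) 0 = besselCoeff α 0 := by
    simpa using add_mul_besselCoeff_add_one hα 0
  simp only [Finset.range_one, Finset.sum_singleton, mul_zero, pow_zero, mul_one, hzero, sub_self,
    sub_zero] at hright
  refine ((hasSum_besselJt (by positivity : 0 ≤ α + 2) x).mul_left (x ^ 2 / 4)).unique
    (hright.congr_fun fun m ↦ ?_)
  have h₁ := add_mul_besselCoeff_add_one hα (m + 1)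
  have h₂ := add_one_mul_besselCoeff_succ (α + 1) m
  rw [add_assoc α, one_add_one_eq_two] at h₂
  push_cast at h₁
  rw [mul_add, pow_add]
  linear_combination (x / 2) ^ (2 * m) * (x / 2) ^ 2 * (h₂ - h₁)

lemma summable_mul_pow_div_factorial (r : ℝ) :
    Summable fun m : ℕ ↦ 1 / (m.factorial : ℝ) * (m * r ^ (2 * m - 1)) := by
  rw [← summable_nat_add_iff 1]
  refine ((summable_pow_div_factorial (r ^ 2)).mul_left r).congr fun m ↦ ?_
  rw [show 2 * (m + 1) - 1 = 2 * m + 1 by omega, Nat.factorial_succ, ← pow_mul, pow_succ]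
  push_cast
  field_simp

lemma norm_besselCoeff_mul_deriv_le (hα : 0 ≤ α) (m : ℕ) {x R : ℝ} (hx : |x| ≤ R) :
    ‖besselCoeff α m * (m * (x / 2) ^ (2 * m - 1))‖ ≤
      1 / Gamma (α + 1) * (1 / m.factorial * (m * (R / 2) ^ (2 * m - 1))) := by
  rw [norm_mul, ← mul_assoc]
  refine mul_le_mul (norm_besselCoeff_le hα m) ?_ (norm_nonneg _)
    ((norm_nonneg _).trans (norm_besselCoeff_le hα m))
  rw [norm_mul, norm_pow, norm_div, norm_natCast, norm_eq_abs, norm_two]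
  gcongr

lemma tsum_besselCoeff_mul_deriv (hα : 0 ≤ α) (x : ℝ) :
    ∑' m : ℕ, besselCoeff α m * (m * (x / 2) ^ (2 * m - 1)) =
      -(x / 2) * besselJt (α + 1) x := by
  have hsum : Summable fun m : ℕ ↦ besselCoeff α m * (m * (x / 2) ^ (2 * m - 1)) :=
    .of_norm_bounded ((summable_mul_pow_div_factorial (|x| / 2)).mul_left _) fun m ↦
      norm_besselCoeff_mul_deriv_le hα m le_rfl
  rw [hsum.tsum_eq_zero_add, ← ((hasSum_besselJt (by positivity : 0 ≤ α + 1) x).mul_left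
    (-(x / 2))).tsum_eq, Nat.cast_zero, zero_mul, mul_zero, zero_add]
  refine tsum_congr fun m ↦ ?_
  rw [show 2 * (m + 1) - 1 = 2 * m + 1 by omega, pow_succ]
  push_cast
  linear_combination (x / 2) ^ (2 * m) * (x / 2) * add_one_mul_besselCoeff_succ α m

lemma hasDerivAt_besselJt (hα : 0 ≤ α) (x : ℝ) :
    HasDerivAt (besselJt α) (-(x / 2) * besselJt (α + 1) x) x := by
  rw [← tsum_besselCoeff_mul_deriv hα]
  refine hasDerivAt_tsum_of_isPreconnected (t := ball 0 (|x| + 1)) (y₀ := x)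
    ((summable_mul_pow_div_factorial ((|x| + 1) / 2)).mul_left _) isOpen_ball
    (convex_ball _ _).isPreconnected (fun m y _ ↦ ?_)
    (fun m y hy ↦ norm_besselCoeff_mul_deriv_le hα m (mem_ball_zero_iff.1 hy).le)
    (by simp) (summable_besselCoeff_mul_pow hα x) (by simp)
  exact ((((hasDerivAt_id y).div_const 2).pow (2 * m)).const_mul (besselCoeff α m)).congr_deriv
    (by simp only [id]; push_cast; ring)

lemma continuous_besselJt (hα : 0 ≤ α) : Continuous (besselJt α) :=
  continuous_iff_continuousAt.2 fun x ↦ (hasDerivAt_besselJt hα x).continuousAt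

lemma besselJt_apply_zero (α : ℝ) : besselJt α 0 = 1 / Gamma (α + 1) := by
  rw [besselJt, tsum_eq_single 0 fun m hm ↦ by simp [hm]]
  simp

lemma besselJt_neg (α x : ℝ) : besselJt α (-x) = besselJt α x := by
  simp only [besselJt, neg_div, pow_mul, neg_sq]

lemma hasDerivAt_besselJt_energy (hα : 0 ≤ α) (x : ℝ) :
    HasDerivAt (fun x ↦ besselJt α x ^ 2 + (x / 2 * besselJt (α + 1) x) ^ 2)
      (-((2 * α + 1) / 2 * x * besselJt (α + 1) x ^ 2)) x := by
  have hJ := (hasDerivAt_besselJt hα x).pow 2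
  have hJ' := (((hasDerivAt_id x).div_const 2).mul
    (hasDerivAt_besselJt (by positivity : 0 ≤ α + 1) x)).pow 2
  refine (hJ.add hJ').congr_deriv ?_
  have hrec := besselJt_add_two hα x
  have hα₂ : α + 1 + 1 = α + 2 := by ring
  simp only [id, Pi.mul_apply, hα₂]
  push_cast
  linear_combination (-x * besselJt (α + 1) x) * hrec

lemma abs_besselJt_le (hα : 0 ≤ α) (x : ℝ) : |besselJt α x| ≤ 1 / Gamma (α + 1) := by
  wlog hx : 0 ≤ x generalizing x
  · rw [← besselJt_neg]
    exact this (-x) (by linarith)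
  have hE := hasDerivAt_besselJt_energy hα
  have hanti := antitoneOn_of_deriv_nonpos (convex_Ici 0)
    (fun y _ ↦ (hE y).continuousAt.continuousWithinAt)
    (fun y _ ↦ (hE y).differentiableAt.differentiableWithinAt) (fun y hy ↦ by
      have hy : 0 < y := by rwa [interior_Ici] at hy
      rw [(hE y).deriv, neg_nonpos]
      positivity)
  have hle := hanti self_mem_Ici hx hx
  simp only [besselJt_apply_zero, zero_div, zero_mul] at hle
  exact abs_le_of_sq_le_sq (by nlinarith [sq_nonneg (x / 2 * besselJt (α + 1) x)])
    (one_div_nonneg.2 (Gamma_pos_of_pos (by positivity)).le)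

end BesselSeries

section BesselMoments

/-- All the moments of `d` on the positive half-line are absolutely convergent. -/
def HasMoments (d : ℝ → ℝ) : Prop := ∀ k : ℕ, IntegrableOn (fun x ↦ d x * x ^ k) (Ioi 0)

/-- The integral of `d x * x ^ (2 * k)` against `J̃_α(a x) J̃_β(b x)`; with
`d x = u x * x ^ (μ + ν + 1)` and `k = 0` this is the integral to be computed. -/
noncomputable def besselMoment (d : ℝ → ℝ) (k : ℕ) (α β a b : ℝ) : ℝ :=
  ∫ x in Ioi (0 : ℝ), d x * x ^ (2 * k) * besselJt α (a * x) * besselJt β (b * x)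

variable {d : ℝ → ℝ} {α β : ℝ}

lemma integrable_mul_besselJt_mul_besselJt {X : Type*} [MeasurableSpace X] {m : Measure X}
    {f g h : X → ℝ} (hf : Integrable f m) (hα : 0 ≤ α) (hβ : 0 ≤ β)
    (hg : Measurable g) (hh : Measurable h) :
    Integrable (fun x ↦ f x * besselJt α (g x) * besselJt β (h x)) m :=
  (hf.mul_bdd ((continuous_besselJt hα).measurable.comp hg).aestronglyMeasurable
    (ae_of_all _ fun _ ↦ abs_besselJt_le hα _)).mul_bdd
    ((continuous_besselJt hβ).measurable.comp hh).aestronglyMeasurable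
    (ae_of_all _ fun _ ↦ abs_besselJt_le hβ _)

lemma HasMoments.integrableOn_mul_besselJt (hd : HasMoments d) (hα : 0 ≤ α) (hβ : 0 ≤ β) (k : ℕ)
    (a b : ℝ) :
    IntegrableOn (fun x ↦ d x * x ^ k * besselJt α (a * x) * besselJt β (b * x)) (Ioi 0) :=
  integrable_mul_besselJt_mul_besselJt (hd k) hα hβ (measurable_const_mul a)
    (measurable_const_mul b)

lemma besselMoment_swap (d : ℝ → ℝ) (k : ℕ) (α β a b : ℝ) :
    besselMoment d k α β a b = besselMoment d k β α b a := by
  simp only [besselMoment, mul_right_comm]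

lemma besselMoment_succ_add_two_left (hd : HasMoments d) (hα : 0 ≤ α) (hβ : 0 ≤ β) (k : ℕ)
    (a b : ℝ) :
    a ^ 2 / 4 * besselMoment d (k + 1) (α + 2) β a b =
      (α + 1) * besselMoment d k (α + 1) β a b - besselMoment d k α β a b := by
  rw [besselMoment, besselMoment, besselMoment, ← integral_const_mul, ← integral_const_mul,
    ← integral_sub ((hd.integrableOn_mul_besselJt (by positivity) hβ _ _ _).const_mul _)
      (hd.integrableOn_mul_besselJt hα hβ _ _ _)]
  refine integral_congr_ae (ae_of_all _ fun x ↦ ?_)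
  linear_combination d x * x ^ (2 * k) * besselJt β (b * x) * besselJt_add_two hα (a * x)

lemma besselMoment_succ_add_two_right (hd : HasMoments d) (hα : 0 ≤ α) (hβ : 0 ≤ β) (k : ℕ)
    (a b : ℝ) :
    b ^ 2 / 4 * besselMoment d (k + 1) α (β + 2) a b =
      (β + 1) * besselMoment d k α (β + 1) a b - besselMoment d k α β a b := by
  simp only [besselMoment_swap d _ α]
  exact besselMoment_succ_add_two_left hd hβ hα k b a

/-- The derivative in `(a, b)` of the integrand `c * J̃_α(a x) * J̃_β(b x)`. -/
noncomputable def besselKernelFDeriv (c α β x : ℝ) (z : ℝ × ℝ) : ℝ × ℝ →L[ℝ] ℝ :=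
  (-(z.1 / 2) * (c * x ^ 2 * besselJt (α + 1) (z.1 * x) * besselJt β (z.2 * x))) •
      ContinuousLinearMap.fst ℝ ℝ ℝ +
    (-(z.2 / 2) * (c * x ^ 2 * besselJt α (z.1 * x) * besselJt (β + 1) (z.2 * x))) •
      ContinuousLinearMap.snd ℝ ℝ ℝ

lemma hasFDerivAt_besselKernel (hα : 0 ≤ α) (hβ : 0 ≤ β) (c x : ℝ) (z : ℝ × ℝ) :
    HasFDerivAt (fun z : ℝ × ℝ ↦ c * besselJt α (z.1 * x) * besselJt β (z.2 * x))
      (besselKernelFDeriv c α β x z) z := by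
  have h₁ := (hasDerivAt_besselJt hα (z.1 * x)).comp_hasFDerivAt z
    ((hasFDerivAt_fst (𝕜 := ℝ) (p := z)).mul_const x)
  have h₂ := (hasDerivAt_besselJt hβ (z.2 * x)).comp_hasFDerivAt z
    ((hasFDerivAt_snd (𝕜 := ℝ) (p := z)).mul_const x)
  refine ((h₁.const_mul c).mul h₂).congr_fderiv ?_
  ext <;> simp [besselKernelFDeriv] <;> ring

lemma norm_besselKernelFDeriv_le (hα : 0 ≤ α) (hβ : 0 ≤ β) (c x : ℝ) {z : ℝ × ℝ} {R : ℝ}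
    (hz : ‖z‖ ≤ R) :
    ‖besselKernelFDeriv c α β x z‖ ≤ ‖c * x ^ 2‖ * (R * (1 / Gamma (α + 1 + 1) * (1 / Gamma (β + 1))
      + 1 / Gamma (α + 1) * (1 / Gamma (β + 1 + 1)))) := by
  have hΓ {y : ℝ} (hy : 0 ≤ y) : 0 ≤ 1 / Gamma (y + 1) :=
    one_div_nonneg.2 (Gamma_pos_of_pos (by positivity)).le
  have := hΓ (by positivity : 0 ≤ α + 1)
  have := hΓ (by positivity : 0 ≤ β + 1)
  have hR : 0 ≤ R := (norm_nonneg z).trans hz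
  have hhalf {y : ℝ} (hy : ‖y‖ ≤ ‖z‖) : ‖-(y / 2)‖ ≤ R := by
    rw [norm_neg, norm_div, norm_two]
    linarith [norm_nonneg y]
  refine (norm_add_le _ _).trans ?_
  rw [norm_smul, norm_smul, norm_mul (-(z.1 / 2)), norm_mul (-(z.2 / 2)),
    norm_mul _ (besselJt β (z.2 * x)), norm_mul _ (besselJt (α + 1) (z.1 * x)),
    norm_mul _ (besselJt (β + 1) (z.2 * x)), norm_mul _ (besselJt α (z.1 * x))]
  calc _ ≤ R * (‖c * x ^ 2‖ * (1 / Gamma (α + 1 + 1)) * (1 / Gamma (β + 1))) * 1 +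
        R * (‖c * x ^ 2‖ * (1 / Gamma (α + 1)) * (1 / Gamma (β + 1 + 1))) * 1 := by
        have := hΓ hα
        have := hΓ hβ
        gcongr
        · exact hhalf (norm_fst_le z)
        · exact abs_besselJt_le (by positivity) _
        · exact abs_besselJt_le hβ _
        · exact ContinuousLinearMap.norm_fst_le ℝ ℝ ℝ
        · exact hhalf (norm_snd_le z)
        · exact abs_besselJt_le hα _
        · exact abs_besselJt_le (by positivity) _
        · exact ContinuousLinearMap.norm_snd_le ℝ ℝ ℝ
    _ = _ := by ring

lemma HasMoments.integrable_besselKernelFDeriv (hd : HasMoments d) (hα : 0 ≤ α) (hβ : 0 ≤ β)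
    (k : ℕ) (a b : ℝ) :
    Integrable (fun x ↦ besselKernelFDeriv (d x * x ^ (2 * k)) α β x (a, b))
        (volume.restrict (Ioi 0)) ∧
      ∫ x in Ioi 0, besselKernelFDeriv (d x * x ^ (2 * k)) α β x (a, b) =
        (-(a / 2) * besselMoment d (k + 1) (α + 1) β a b) • ContinuousLinearMap.fst ℝ ℝ ℝ +
        (-(b / 2) * besselMoment d (k + 1) α (β + 1) a b) • ContinuousLinearMap.snd ℝ ℝ ℝ := by
  have h₁ := ((hd.integrableOn_mul_besselJt (by positivity : 0 ≤ α + 1) hβ (2 * (k + 1)) a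
    b).const_mul (-(a / 2))).smul_const (ContinuousLinearMap.fst ℝ ℝ ℝ)
  have h₂ := ((hd.integrableOn_mul_besselJt hα (by positivity : 0 ≤ β + 1) (2 * (k + 1)) a
    b).const_mul (-(b / 2))).smul_const (ContinuousLinearMap.snd ℝ ℝ ℝ)
  simp only [besselKernelFDeriv, mul_assoc (d _), ← pow_add]
  simp only [mul_add, mul_one, mul_assoc (d _)] at h₁ h₂
  refine ⟨h₁.add h₂, ?_⟩
  rw [integral_add h₁ h₂, integral_smul_const, integral_smul_const, integral_const_mul,
    integral_const_mul]
  simp only [besselMoment, mul_add, mul_one, mul_assoc (d _)]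

lemma hasFDerivAt_besselMoment (hd : HasMoments d) (hα : 0 ≤ α) (hβ : 0 ≤ β) (k : ℕ) (a b : ℝ) :
    HasFDerivAt (fun z : ℝ × ℝ ↦ besselMoment d k α β z.1 z.2)
      ((-(a / 2) * besselMoment d (k + 1) (α + 1) β a b) • ContinuousLinearMap.fst ℝ ℝ ℝ +
        (-(b / 2) * besselMoment d (k + 1) α (β + 1) a b) • ContinuousLinearMap.snd ℝ ℝ ℝ)
      (a, b) := by
  obtain ⟨h_int, heq⟩ := hd.integrable_besselKernelFDeriv hα hβ k a b
  have hnorm {z : ℝ × ℝ} (hz : z ∈ ball (a, b) 1) : ‖z‖ ≤ ‖(a, b)‖ + 1 := by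
    linarith [norm_le_norm_add_norm_sub (a, b) z, mem_ball_iff_norm.1 hz, norm_sub_rev (a, b) z]
  rw [← heq]
  refine hasFDerivAt_integral_of_dominated_of_fderiv_le (𝕜 := ℝ) (μ := volume.restrict (Ioi 0))
    (F := fun z : ℝ × ℝ ↦ fun x ↦
      d x * x ^ (2 * k) * besselJt α (z.1 * x) * besselJt β (z.2 * x))
    (F' := fun z x ↦ besselKernelFDeriv (d x * x ^ (2 * k)) α β x z) (s := ball (a, b) 1)
    (x₀ := (a, b))
    (bound := fun x ↦ ‖d x * x ^ (2 * k) * x ^ 2‖ * ((‖(a, b)‖ + 1) * (1 / Gamma (α + 1 + 1) *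
      (1 / Gamma (β + 1)) + 1 / Gamma (α + 1) * (1 / Gamma (β + 1 + 1)))))
    (ball_mem_nhds _ one_pos)
    (.of_forall fun z ↦ (hd.integrableOn_mul_besselJt hα hβ _ z.1 z.2).1)
    (hd.integrableOn_mul_besselJt hα hβ _ a b) h_int.1
    (ae_of_all _ fun x z hz ↦ norm_besselKernelFDeriv_le hα hβ _ x (hnorm hz)) ?_
    (ae_of_all _ fun x z _ ↦ hasFDerivAt_besselKernel hα hβ _ x z)
  have hmom := (hd (2 * k + 2)).norm
  simp only [pow_add, ← mul_assoc] at hmom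
  exact hmom.mul_const _

lemma hasDerivAt_besselMoment_comp (hd : HasMoments d) (hα : 0 ≤ α) (hβ : 0 ≤ β) (k : ℕ)
    {a b : ℝ → ℝ} {a' b' τ : ℝ} (ha : HasDerivAt a a' τ) (hb : HasDerivAt b b' τ) :
    HasDerivAt (fun τ ↦ besselMoment d k α β (a τ) (b τ))
      (-(a τ * a' / 2) * besselMoment d (k + 1) (α + 1) β (a τ) (b τ)
        - (b τ * b' / 2) * besselMoment d (k + 1) α (β + 1) (a τ) (b τ)) τ := by
  refine ((hasFDerivAt_besselMoment hd hα hβ k (a τ) (b τ)).comp_hasDerivAt τ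
    (ha.prodMk hb)).congr_deriv ?_
  simp only [add_apply, smul_apply,
    ContinuousLinearMap.coe_fst', ContinuousLinearMap.coe_snd', smul_eq_mul]
  ring

end BesselMoments

section ExpSubstitution

lemma integral_Ioi_eq_integral_comp_exp (g : ℝ → ℝ) :
    ∫ x in Ioi (0 : ℝ), g x = ∫ t, exp t * g (exp t) := by
  have h := integral_image_eq_integral_abs_deriv_smul (s := univ) MeasurableSet.univ
    (fun x _ ↦ (hasDerivAt_exp x).hasDerivWithinAt) exp_injective.injOn g
  simpa only [image_univ, range_exp, abs_of_pos (exp_pos _), smul_eq_mul, setIntegral_univ] using h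

lemma integrableOn_Ioi_iff_integrable_comp_exp (g : ℝ → ℝ) :
    IntegrableOn g (Ioi 0) ↔ Integrable fun t ↦ exp t * g (exp t) := by
  have h := integrableOn_image_iff_integrableOn_abs_deriv_smul (s := univ) MeasurableSet.univ
    (fun x _ ↦ (hasDerivAt_exp x).hasDerivWithinAt) exp_injective.injOn g
  simpa only [image_univ, range_exp, abs_of_pos (exp_pos _), smul_eq_mul, integrableOn_univ] using h

variable {u : ℝ → ℝ} {μ ν C : ℝ}

lemma integrableOn_mul_rpow (hu : ContinuousOn u (Ioi 0))
    (hC : ∀ x > 0, |u x| ≤ C * (x ^ (-ν) * exp (-x / 4))) {r : ℝ} (hr : ν - 1 < r) :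
    IntegrableOn (fun x ↦ u x * x ^ r) (Ioi 0) := by
  have hdom := (integrableOn_rpow_mul_exp_neg_mul_rpow (p := 1) (s := r - ν) (b := 1 / 4)
    (by linarith) one_pos (by norm_num)).const_mul C
  refine hdom.mono' ((hu.mul fun x hx ↦ (continuousAt_rpow_const x r
    (.inl hx.ne')).continuousWithinAt).aestronglyMeasurable measurableSet_Ioi)
    ((ae_restrict_iff' measurableSet_Ioi).2 (ae_of_all _ fun x (hx : 0 < x) ↦ ?_))
  have hxr := rpow_pos_of_pos hx r
  calc ‖u x * x ^ r‖ = |u x| * x ^ r := by rw [norm_mul, norm_of_nonneg hxr.le, norm_eq_abs]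
    _ ≤ C * (x ^ (-ν) * exp (-x / 4)) * x ^ r := by gcongr; exact hC x hx
    _ = C * (x ^ (r - ν) * exp (-(1 / 4) * x ^ (1 : ℝ))) := by
      rw [sub_eq_neg_add, rpow_add hx, rpow_one]
      ring_nf

lemma hasMoments_mul_rpow (hμ : 0 < μ) (hu : ContinuousOn u (Ioi 0))
    (hC : ∀ x > 0, |u x| ≤ C * (x ^ (-ν) * exp (-x / 4))) :
    HasMoments fun x ↦ u x * x ^ (μ + ν + 1) := fun k ↦ by
  refine (integrableOn_mul_rpow (r := μ + ν + 1 + k) hu hC ?_).congr_fun (fun x hx ↦ ?_)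
    measurableSet_Ioi
  · linarith [k.cast_nonneg (α := ℝ)]
  · simp only [rpow_add_natCast (ne_of_gt hx), mul_assoc]

lemma integrable_comp_exp_mul_exp (hμ : 0 < μ) (hu : ContinuousOn u (Ioi 0))
    (hC : ∀ x > 0, |u x| ≤ C * (x ^ (-ν) * exp (-x / 4))) (k : ℕ) :
    Integrable fun t ↦ u (exp t) * exp ((μ + ν) * t) * exp (2 * t) ^ k := by
  have h := integrableOn_mul_rpow (r := μ + ν - 1 + 2 * k) hu hC
    (by linarith [k.cast_nonneg (α := ℝ)])
  rw [integrableOn_Ioi_iff_integrable_comp_exp] at h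
  refine h.congr (ae_of_all _ fun t ↦ ?_)
  simp only [← exp_mul, ← exp_nat_mul]
  rw [mul_left_comm, ← exp_add, mul_assoc, ← exp_add]
  ring_nf

end ExpSubstitution

section LogKernel

/-- The product `x ^ (m + 2 * k) * J̃_α(a x) * J̃_β(b x)` on the logarithmic scale `x = e^t`. -/
noncomputable def logKernel (m a b : ℝ) (k : ℕ) (α β : ℝ) : ℝ → ℝ := fun t ↦
  exp (m * t) * exp (2 * t) ^ k * besselJt α (a * exp t) * besselJt β (b * exp t)

variable {m a b α β : ℝ}

lemma exp_two_mul_eq_sq (t : ℝ) : exp (2 * t) = exp t ^ 2 := by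
  rw [← exp_nat_mul, Nat.cast_two]

lemma hasDerivAt_logKernel (hα : 0 ≤ α) (hβ : 0 ≤ β) (k : ℕ) (t : ℝ) :
    HasDerivAt (logKernel m a b k α β)
      ((m + 2 * k) * logKernel m a b k α β t - a ^ 2 / 2 * logKernel m a b (k + 1) (α + 1) β t
        - b ^ 2 / 2 * logKernel m a b (k + 1) α (β + 1) t) t := by
  have hexp (c : ℝ) : HasDerivAt (fun t ↦ exp (c * t)) (c * exp (c * t)) t :=
    ((hasDerivAt_id t).const_mul c).exp.congr_deriv (by simp [mul_comm])
  have hbessel {γ : ℝ} (hγ : 0 ≤ γ) (c : ℝ) : HasDerivAt (fun t ↦ besselJt γ (c * exp t))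
      (-(c * exp t / 2) * besselJt (γ + 1) (c * exp t) * (c * exp t)) t :=
    .comp (h₂ := besselJt γ) t (hasDerivAt_besselJt hγ (c * exp t))
      ((hasDerivAt_exp t).const_mul c)
  have hmain := (((hexp m).mul (hexp (2 * k))).mul (hbessel hα a)).mul (hbessel hβ b)
  have hk (t : ℝ) : exp (2 * k * t) = exp (2 * t) ^ k := by rw [← exp_nat_mul]; ring_nf
  simp only [hk] at hmain
  refine hmain.congr_deriv ?_
  simp only [logKernel, Pi.mul_apply, pow_succ, exp_two_mul_eq_sq]
  ring

lemma exp_mul_logKernel (m a b : ℝ) (k : ℕ) (α β t : ℝ) :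
    exp (2 * t) * logKernel m a b k α β t = logKernel m a b (k + 1) α β t := by
  simp only [logKernel, pow_succ]
  ring

lemma logKernel_swap (m a b : ℝ) (k : ℕ) (α β t : ℝ) :
    logKernel m a b k α β t = logKernel m b a k β α t := by
  simp only [logKernel, mul_right_comm]

lemma logKernel_add_two_left (hα : 0 ≤ α) (m b : ℝ) (k : ℕ) (β t : ℝ) :
    a ^ 2 / 4 * logKernel m a b (k + 1) (α + 2) β t =
      (α + 1) * logKernel m a b k (α + 1) β t - logKernel m a b k α β t := by
  simp only [logKernel, pow_succ, exp_two_mul_eq_sq]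
  linear_combination exp (m * t) * (exp t ^ 2) ^ k * besselJt β (b * exp t) *
    besselJt_add_two hα (a * exp t)

lemma logKernel_add_two_right (hβ : 0 ≤ β) (m a : ℝ) (k : ℕ) (α t : ℝ) :
    b ^ 2 / 4 * logKernel m a b (k + 1) α (β + 2) t =
      (β + 1) * logKernel m a b k α (β + 1) t - logKernel m a b k α β t := by
  simp only [logKernel_swap m a b]
  exact logKernel_add_two_left hβ m a k α t

/-- The span of all logarithmic kernels with nonnegative indices. -/
noncomputable def logKernelSpan (m a b : ℝ) : Submodule ℝ (ℝ → ℝ) :=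
  .span ℝ {F | ∃ (k : ℕ) (α β : ℝ), 0 ≤ α ∧ 0 ≤ β ∧ F = logKernel m a b k α β}

lemma logKernel_mem_span (hα : 0 ≤ α) (hβ : 0 ≤ β) (k : ℕ) :
    logKernel m a b k α β ∈ logKernelSpan m a b :=
  Submodule.subset_span ⟨k, α, β, hα, hβ, rfl⟩

lemma exists_hasDerivAt_of_mem_logKernelSpan {F : ℝ → ℝ} (hF : F ∈ logKernelSpan m a b) :
    ∃ G ∈ logKernelSpan m a b, ∀ t, HasDerivAt F (G t) t := by
  induction hF using Submodule.span_induction with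
  | mem F hF =>
    obtain ⟨k, α, β, hα, hβ, rfl⟩ := hF
    have hα' : 0 ≤ α + 1 := by positivity
    have hβ' : 0 ≤ β + 1 := by positivity
    exact ⟨_, Submodule.sub_mem _ (Submodule.sub_mem _
      (Submodule.smul_mem _ (m + 2 * k) (logKernel_mem_span hα hβ k))
      (Submodule.smul_mem _ (a ^ 2 / 2) (logKernel_mem_span hα' hβ (k + 1))))
      (Submodule.smul_mem _ (b ^ 2 / 2) (logKernel_mem_span hα hβ' (k + 1))),
      hasDerivAt_logKernel hα hβ k⟩
  | zero => exact ⟨0, Submodule.zero_mem _, fun t ↦ hasDerivAt_const t 0⟩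
  | add F G _ _ hF hG =>
    obtain ⟨F', hF', hderivF⟩ := hF
    obtain ⟨G', hG', hderivG⟩ := hG
    exact ⟨F' + G', Submodule.add_mem _ hF' hG', fun t ↦ (hderivF t).add (hderivG t)⟩
  | smul c F _ hF =>
    obtain ⟨F', hF', hderivF⟩ := hF
    exact ⟨c • F', Submodule.smul_mem _ _ hF', fun t ↦ (hderivF t).const_mul c⟩

lemma isTestSpace_logKernelSpan (m a b : ℝ) : IsTestSpace (logKernelSpan m a b) where
  differentiable F hF t :=
    let ⟨_, _, h⟩ := exists_hasDerivAt_of_mem_logKernelSpan hF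
    (h t).differentiableAt
  deriv_mem F hF := by
    obtain ⟨G, hG, h⟩ := exists_hasDerivAt_of_mem_logKernelSpan hF
    rwa [deriv_eq h]
  exp_mul_mem F hF := by
    induction hF using Submodule.span_induction with
    | mem F hF =>
      obtain ⟨k, α, β, hα, hβ, rfl⟩ := hF
      simpa only [exp_mul_logKernel] using logKernel_mem_span hα hβ (k + 1)
    | zero =>
      simp only [Pi.zero_apply, mul_zero]
      exact Submodule.zero_mem _
    | add F G _ _ hF hG =>
      simp only [Pi.add_apply, mul_add]
      exact Submodule.add_mem _ hF hG
    | smul c F _ hF =>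
      simp only [Pi.smul_apply, smul_eq_mul, mul_left_comm _ c]
      exact Submodule.smul_mem _ c hF

lemma integrable_mul_of_mem_logKernelSpan {U : ℝ → ℝ}
    (hU : ∀ k : ℕ, Integrable fun t ↦ U t * exp (m * t) * exp (2 * t) ^ k) {F : ℝ → ℝ}
    (hF : F ∈ logKernelSpan m a b) : Integrable fun t ↦ U t * F t := by
  induction hF using Submodule.span_induction with
  | mem F hF =>
    obtain ⟨k, α, β, hα, hβ, rfl⟩ := hF
    simpa only [logKernel, ← mul_assoc] using integrable_mul_besselJt_mul_besselJt (hU k) hα hβ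
      (measurable_exp.const_mul a) (measurable_exp.const_mul b)
  | zero => simp
  | add F G _ _ hF hG =>
    simp only [Pi.add_apply, mul_add]
    exact hF.add hG
  | smul c F _ hF =>
    simp only [Pi.smul_apply, smul_eq_mul, mul_left_comm _ c]
    exact hF.const_mul c

lemma integral_mul_logKernel_succ (u : ℝ → ℝ) (m a b : ℝ) (k : ℕ) (α β : ℝ) :
    ∫ t, u (exp t) * logKernel m a b (k + 1) α β t =
      besselMoment (fun x ↦ u x * x ^ (m + 1)) k α β a b := by
  rw [besselMoment, integral_Ioi_eq_integral_comp_exp]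
  refine integral_congr_ae (ae_of_all _ fun t ↦ ?_)
  have hpow : exp t ^ (m + 1) = exp (m * t) * exp t := by
    rw [← exp_mul, ← exp_add]
    ring_nf
  simp only [logKernel, hpow, exp_two_mul_eq_sq]
  ring

end LogKernel

section MomentRelation

variable {m a b α β c₀ c₁ μ ν l : ℝ}

lemma IsTestSpace.logAdjoint_add {S : Submodule ℝ (ℝ → ℝ)} (hS : IsTestSpace S) {F G : ℝ → ℝ}
    (hF : F ∈ S) (hG : G ∈ S) (t : ℝ) :
    logAdjoint c₁ c₀ (F + G) t = logAdjoint c₁ c₀ F t + logAdjoint c₁ c₀ G t := by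
  have h : deriv (F + G) = deriv F + deriv G := deriv_eq fun t ↦
    (hS.hasDerivAt hF t).add (hS.hasDerivAt hG t)
  have h' := ((hS.hasDerivAt (hS.deriv_mem F hF) t).add (hS.hasDerivAt (hS.deriv_mem G hG) t)).deriv
  simp only [logAdjoint, h, h', Pi.add_apply]
  ring

lemma logAdjoint_smul (c : ℝ) (F : ℝ → ℝ) (t : ℝ) :
    logAdjoint c₁ c₀ (c • F) t = c * logAdjoint c₁ c₀ F t := by
  have h (F : ℝ → ℝ) : deriv (c • F) = c • deriv F := funext fun t ↦ deriv_const_smul_field c F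
  simp only [logAdjoint, h, Pi.smul_apply, smul_eq_mul]
  ring

lemma logAdjoint_logKernel (hα : 0 ≤ α) (hβ : 0 ≤ β) (k : ℕ) (t : ℝ) :
    logAdjoint c₁ c₀ (logKernel m a b k α β) t =
      ((m + 2 * k) ^ 2 - c₁ * (m + 2 * k) + c₀) * logKernel m a b k α β t
      - (1 + a ^ 2 + b ^ 2) * logKernel m a b (k + 1) α β t
      + a ^ 2 / 2 * (c₁ - 2 * (m + 2 * k) + 2 * α) * logKernel m a b (k + 1) (α + 1) β t
      + b ^ 2 / 2 * (c₁ - 2 * (m + 2 * k) + 2 * β) * logKernel m a b (k + 1) α (β + 1) t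
      + a ^ 2 * b ^ 2 / 2 * logKernel m a b (k + 2) (α + 1) (β + 1) t := by
  have hα' : 0 ≤ α + 1 := by positivity
  have hβ' : 0 ≤ β + 1 := by positivity
  have hT (t : ℝ) := hasDerivAt_logKernel (m := m) (a := a) (b := b) hα hβ k t
  have hT' := (((hT t).const_mul (m + 2 * k)).sub
    ((hasDerivAt_logKernel (m := m) (a := a) (b := b) hα' hβ (k + 1) t).const_mul
      (a ^ 2 / 2))).sub
    ((hasDerivAt_logKernel (m := m) (a := a) (b := b) hα hβ' (k + 1) t).const_mul (b ^ 2 / 2))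
  rw [logAdjoint, deriv_eq hT]
  refine (congrArg (· - _ + _) hT'.deriv).trans ?_
  have hα₂ := logKernel_add_two_left (a := a) hα m b (k + 1) β t
  have hβ₂ := logKernel_add_two_right (b := b) hβ m a (k + 1) α t
  have hexp := exp_mul_logKernel m a b k α β t
  rw [add_assoc α, add_assoc β, one_add_one_eq_two]
  push_cast
  linear_combination a ^ 2 * hα₂ + b ^ 2 * hβ₂ - hexp

lemma logAdjoint_logKernel_zero (hμ : 0 ≤ μ) (hν : 0 ≤ ν) :
    logAdjoint (2 * μ + ν) (μ * (μ + ν)) (logKernel (μ + ν) a b 0 (μ / 2) (ν / 2)) =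
      (-(1 + a ^ 2 + b ^ 2)) • logKernel (μ + ν) a b 1 (μ / 2) (ν / 2)
      + (a ^ 2 / 2 * (μ - ν)) • logKernel (μ + ν) a b 1 (μ / 2 + 1) (ν / 2)
      + (a ^ 2 * b ^ 2 / 2) • logKernel (μ + ν) a b 2 (μ / 2 + 1) (ν / 2 + 1) := by
  ext t
  rw [logAdjoint_logKernel (by positivity) (by positivity)]
  simp only [Pi.add_apply, Pi.smul_apply, smul_eq_mul, Nat.cast_zero, zero_add]
  ring

lemma logAdjoint_logAdjoint_logKernel_zero (hμ : 0 ≤ μ) (hν : 0 ≤ ν) (t : ℝ) :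
    logAdjoint ν 0 (logAdjoint (2 * μ + ν) (μ * (μ + ν))
        (logKernel (μ + ν) a b 0 (μ / 2) (ν / 2))) t =
      (-(1 + b ^ 2) * (μ + 2) * (μ + ν + 2) - a ^ 2 * (ν + 2) * (μ + ν + 2)) *
          logKernel (μ + ν) a b 1 (μ / 2) (ν / 2) t
        + a ^ 2 * (2 + 4 * b ^ 2 + 2 * a ^ 2 + ν * (1 + a ^ 2 + b ^ 2)) *
          logKernel (μ + ν) a b 2 (μ / 2 + 1) (ν / 2) t
        + b ^ 2 * (2 + 2 * b ^ 2 + 4 * a ^ 2 + μ * (1 + a ^ 2 + b ^ 2)) *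
          logKernel (μ + ν) a b 2 (μ / 2) (ν / 2 + 1) t
        + (1 + 2 * a ^ 2 + 2 * b ^ 2 + a ^ 4 + b ^ 4 + 6 * a ^ 2 * b ^ 2) *
          logKernel (μ + ν) a b 2 (μ / 2) (ν / 2) t
        - a ^ 2 * b ^ 2 * (1 + a ^ 2 + b ^ 2) *
          logKernel (μ + ν) a b 3 (μ / 2 + 1) (ν / 2 + 1) t := by
  have hα : 0 ≤ μ / 2 := by positivity
  have hβ : 0 ≤ ν / 2 := by positivity
  have hα' : 0 ≤ μ / 2 + 1 := by positivity
  have hβ' : 0 ≤ ν / 2 + 1 := by positivity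
  have hS := isTestSpace_logKernelSpan (μ + ν) a b
  have hmem {k : ℕ} {α β : ℝ} (c : ℝ) (hα : 0 ≤ α) (hβ : 0 ≤ β) :=
    Submodule.smul_mem _ c (logKernel_mem_span (m := μ + ν) (a := a) (b := b) hα hβ k)
  rw [logAdjoint_logKernel_zero hμ hν, hS.logAdjoint_add (Submodule.add_mem _ (hmem _ hα hβ)
    (hmem _ hα' hβ)) (hmem _ hα' hβ'), hS.logAdjoint_add (hmem _ hα hβ) (hmem _ hα' hβ)]
  simp only [logAdjoint_smul]
  rw [logAdjoint_logKernel hα hβ, logAdjoint_logKernel hα' hβ, logAdjoint_logKernel hα' hβ']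
  have h₁ := logKernel_add_two_left (a := a) hα (μ + ν) b 1 (ν / 2) t
  have h₂ := logKernel_add_two_left (a := a) hα (μ + ν) b 2 (ν / 2 + 1) t
  have h₃ := logKernel_add_two_right (b := b) hβ (μ + ν) a 2 (μ / 2 + 1) t
  have h₄ := logKernel_add_two_left (a := a) hα (μ + ν) b 3 (ν / 2 + 2) t
  have h₅ := logKernel_add_two_right (b := b) hβ (μ + ν) a 2 (μ / 2) t
  rw [add_assoc (μ / 2), add_assoc (ν / 2), one_add_one_eq_two]
  norm_num only at h₁ h₂ h₃ h₄ h₅ ⊢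
  linear_combination (-(μ - ν) * (μ + ν + 2) * a ^ 2) * h₁
    + (μ - ν - (μ + ν + 6)) * a ^ 2 * b ^ 2 * h₂ - 2 * a ^ 2 * b ^ 2 * h₃ + a ^ 2 * b ^ 4 * h₄
    - 4 * a ^ 2 * b ^ 2 * h₅

/-- The linear relation between Bessel moments into which integration by parts turns the eigenvalue
equation `D_{μ,ν} u = l u`, where `d x = u x * x ^ (μ + ν + 1)`. -/
def MomentRelation (d : ℝ → ℝ) (μ ν l : ℝ) : Prop := ∀ a b : ℝ,
  (-(1 + b ^ 2) * (μ + 2) * (μ + ν + 2) - a ^ 2 * (ν + 2) * (μ + ν + 2)) *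
      besselMoment d 0 (μ / 2) (ν / 2) a b
    + a ^ 2 * (2 + 4 * b ^ 2 + 2 * a ^ 2 + ν * (1 + a ^ 2 + b ^ 2)) *
      besselMoment d 1 (μ / 2 + 1) (ν / 2) a b
    + b ^ 2 * (2 + 2 * b ^ 2 + 4 * a ^ 2 + μ * (1 + a ^ 2 + b ^ 2)) *
      besselMoment d 1 (μ / 2) (ν / 2 + 1) a b
    + (1 + 2 * a ^ 2 + 2 * b ^ 2 + a ^ 4 + b ^ 4 + 6 * a ^ 2 * b ^ 2) *
      besselMoment d 1 (μ / 2) (ν / 2) a b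
    - a ^ 2 * b ^ 2 * (1 + a ^ 2 + b ^ 2) * besselMoment d 2 (μ / 2 + 1) (ν / 2 + 1) a b
    = l * besselMoment d 0 (μ / 2) (ν / 2) a b

-- The relation is symmetric under `(μ, a) ↔ (ν, b)` up to a shift of the eigenvalue, so the
-- equation in `ϑ` derived from it below also yields the equation in `φ`.
lemma MomentRelation.swap {d : ℝ → ℝ} (h : MomentRelation d μ ν l) :
    MomentRelation d ν μ (l + (μ - ν) * (μ + ν + 2)) := by
  intro a b
  simp only [besselMoment_swap d _ (ν / 2), besselMoment_swap d _ (ν / 2 + 1)]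
  linear_combination h b a

lemma IsEigenfunction.integral_mul_logAdjoint {u : ℝ → ℝ} (h : IsEigenfunction μ ν l u)
    {S : Submodule ℝ (ℝ → ℝ)} (hS : IsTestSpace S)
    (h_int : ∀ F ∈ S, Integrable fun t ↦ u (exp t) * F t) {A : ℝ → ℝ} (hA : A ∈ S) :
    ∫ t, u (exp t) * (logAdjoint ν 0 (logAdjoint (2 * μ + ν) (μ * (μ + ν)) A) t
      - l * exp (2 * t) * A t) = 0 := by
  have hu := h.contDiffOn
  have hQ := contDiffOn_besselQ hu ν 0
  refine integral_mul_logAdjoint_eq_zero hS h_int (hasDerivAt_comp_exp hu)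
    (hasDerivAt_comp_exp (contDiffOn_eulerOp hu)) (fun t ↦ ?_) (hasDerivAt_comp_exp hQ)
    (hasDerivAt_comp_exp (contDiffOn_eulerOp hQ)) (fun t ↦ ?_) hA
  · rw [besselQ_eq_eulerOp hu ν 0 (exp_pos t), exp_two_mul_eq_sq]
    ring
  · rw [exp_two_mul_eq_sq]
    exact (h.eulerOp_besselQ (exp_pos t)).symm

lemma IsEigenfunction.momentRelation {u : ℝ → ℝ} {C : ℝ} (h : IsEigenfunction μ ν l u)
    (hμ : 0 < μ) (hν : 0 ≤ ν) (hC : ∀ x > 0, |u x| ≤ C * (x ^ (-ν) * exp (-x / 4))) :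
    MomentRelation (fun x ↦ u x * x ^ (μ + ν + 1)) μ ν l := by
  intro a b
  have hα : 0 ≤ μ / 2 := by positivity
  have hβ : 0 ≤ ν / 2 := by positivity
  have hα' : 0 ≤ μ / 2 + 1 := by positivity
  have hβ' : 0 ≤ ν / 2 + 1 := by positivity
  have h_int : ∀ F ∈ logKernelSpan (μ + ν) a b, Integrable fun t ↦ u (exp t) * F t := fun F hF ↦
    integrable_mul_of_mem_logKernelSpan
      (integrable_comp_exp_mul_exp hμ h.contDiffOn.continuousOn hC) hF
  have h₁ := h_int _ (logKernel_mem_span hα hβ 1)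
  have h₂ := h_int _ (logKernel_mem_span hα' hβ 2)
  have h₃ := h_int _ (logKernel_mem_span hα hβ' 2)
  have h₄ := h_int _ (logKernel_mem_span hα hβ 2)
  have h₅ := h_int _ (logKernel_mem_span hα' hβ' 3)
  have hweak := h.integral_mul_logAdjoint (isTestSpace_logKernelSpan _ a b) h_int
    (logKernel_mem_span hα hβ 0)
  simp only [logAdjoint_logAdjoint_logKernel_zero hμ.le hν, mul_assoc l, exp_mul_logKernel] at hweak
  simp only [mul_sub (u _), mul_add (u _), mul_left_comm (u _)] at hweak
  rw [integral_sub (by fun_prop) (by fun_prop), integral_sub (by fun_prop) (by fun_prop),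
    integral_add (by fun_prop) (by fun_prop), integral_add (by fun_prop) (by fun_prop),
    integral_add (by fun_prop) (by fun_prop)] at hweak
  simp only [integral_const_mul, integral_mul_logKernel_succ] at hweak
  linear_combination hweak

end MomentRelation

/-! ### Separation of variables -/

section AngularTransform

variable {ϑ φ : ℝ}

/-- The coordinate `a = sin ϑ / (cos ϑ + cos φ)`; the companion `b` is `angleRatio φ ϑ`. -/
noncomputable def angleRatio (ϑ φ : ℝ) : ℝ := sin ϑ / (cos ϑ + cos φ)

lemma sin_eq_mul_angleRatio (h : cos ϑ + cos φ ≠ 0) :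
    sin ϑ = (cos ϑ + cos φ) * angleRatio ϑ φ :=
  (mul_div_cancel₀ _ h).symm

lemma cos_eq_mul_angleRatio (h : cos ϑ + cos φ ≠ 0) :
    cos ϑ = (cos ϑ + cos φ) * ((1 - angleRatio ϑ φ ^ 2 + angleRatio φ ϑ ^ 2) / 2) := by
  rw [angleRatio, angleRatio, add_comm (cos φ)]
  field_simp
  linear_combination sin_sq_add_cos_sq ϑ - sin_sq_add_cos_sq φ

lemma hasDerivAt_angleRatio_left (h : cos ϑ + cos φ ≠ 0) :
    HasDerivAt (fun ϑ ↦ angleRatio ϑ φ)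
      ((1 + angleRatio ϑ φ ^ 2 + angleRatio φ ϑ ^ 2) / 2) ϑ := by
  refine ((hasDerivAt_sin ϑ).div ((hasDerivAt_cos ϑ).add_const _) h).congr_deriv ?_
  rw [angleRatio, angleRatio, add_comm (cos φ)]
  field_simp
  linear_combination sin_sq_add_cos_sq ϑ - sin_sq_add_cos_sq φ

lemma hasDerivAt_angleRatio_right (h : cos ϑ + cos φ ≠ 0) :
    HasDerivAt (fun ϑ ↦ angleRatio φ ϑ) (angleRatio ϑ φ * angleRatio φ ϑ) ϑ := by
  rw [add_comm] at h
  refine ((hasDerivAt_const ϑ (sin φ)).div ((hasDerivAt_cos ϑ).const_add _) h).congr_deriv ?_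
  rw [angleRatio, angleRatio, add_comm (cos ϑ)]
  field_simp
  ring

lemma hasDerivAt_cos_add_cos_rpow_neg (h : cos ϑ + cos φ ≠ 0) (s : ℝ) :
    HasDerivAt (fun ϑ ↦ (cos ϑ + cos φ) ^ (-s))
      (s * angleRatio ϑ φ * (cos ϑ + cos φ) ^ (-s)) ϑ := by
  refine (((hasDerivAt_cos ϑ).add_const _).rpow_const (Or.inl h)).congr_deriv ?_
  rw [rpow_sub_one h, angleRatio]
  field_simp

/-- `(cos ϑ + cos φ) ^ (-(μ + ν + 2) / 2)` times the Bessel moment with `a = angleRatio ϑ φ` and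
`b = angleRatio φ ϑ`: the normalization in which the moment relation separates in `ϑ` and `φ`. -/
noncomputable def angularTransform (d : ℝ → ℝ) (μ ν φ ϑ : ℝ) : ℝ :=
  (cos ϑ + cos φ) ^ (-((μ + ν + 2) / 2)) *
    besselMoment d 0 (μ / 2) (ν / 2) (angleRatio ϑ φ) (angleRatio φ ϑ)

/-- The `ϑ`-derivative of `angularTransform` without its prefactor, as a function of `a` and `b`. -/
noncomputable def slopeMoment (d : ℝ → ℝ) (μ ν a b : ℝ) : ℝ :=
  a * ((μ + ν + 2) / 2 * besselMoment d 0 (μ / 2) (ν / 2) a b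
    - (1 + a ^ 2 + b ^ 2) / 4 * besselMoment d 1 (μ / 2 + 1) (ν / 2) a b
    - b ^ 2 / 2 * besselMoment d 1 (μ / 2) (ν / 2 + 1) a b)

variable {d : ℝ → ℝ} {μ ν l : ℝ}

lemma hasDerivAt_angularTransform (hd : HasMoments d) (hμ : 0 ≤ μ) (hν : 0 ≤ ν)
    (h : cos ϑ + cos φ ≠ 0) :
    HasDerivAt (angularTransform d μ ν φ) ((cos ϑ + cos φ) ^ (-((μ + ν + 2) / 2)) *
      slopeMoment d μ ν (angleRatio ϑ φ) (angleRatio φ ϑ)) ϑ := by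
  refine ((hasDerivAt_cos_add_cos_rpow_neg h _).mul (hasDerivAt_besselMoment_comp hd
    (α := μ / 2) (β := ν / 2) (by positivity) (by positivity) 0 (hasDerivAt_angleRatio_left h)
    (hasDerivAt_angleRatio_right h))).congr_deriv ?_
  rw [slopeMoment]
  ring

/-- The equation satisfied in `x = ϑ` by `x ↦ C(cos x)` for a Gegenbauer polynomial `C`, with
`W` standing for `Z'`. Multiplied by `sin x`, it makes sense at `x = 0`, where it forces
`W 0 = 0` if `m ≠ 0`. -/
def IsAngularSolution (m κ : ℝ) (s : Set ℝ) (Z W : ℝ → ℝ) : Prop :=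
  ∀ x ∈ s, HasDerivAt Z (W x) x ∧
    ∃ w', HasDerivAt W w' x ∧ sin x * w' + m * cos x * W x + κ * sin x * Z x = 0

lemma MomentRelation.exists_hasDerivAt_slopeMoment (hrel : MomentRelation d μ ν l)
    (hd : HasMoments d) (hμ : 0 ≤ μ) (hν : 0 ≤ ν) {a b : ℝ → ℝ}
    (ha : HasDerivAt a ((1 + a ϑ ^ 2 + b ϑ ^ 2) / 2) ϑ) (hb : HasDerivAt b (a ϑ * b ϑ) ϑ) :
    ∃ k', HasDerivAt (fun ϑ ↦ slopeMoment d μ ν (a ϑ) (b ϑ)) k' ϑ ∧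
      a ϑ * ((μ + ν + 2) / 2 * a ϑ * slopeMoment d μ ν (a ϑ) (b ϑ) + k')
        + (μ + 1) * ((1 - a ϑ ^ 2 + b ϑ ^ 2) / 2) * slopeMoment d μ ν (a ϑ) (b ϑ)
        + l / 4 * a ϑ * besselMoment d 0 (μ / 2) (ν / 2) (a ϑ) (b ϑ) = 0 := by
  have hα : 0 ≤ μ / 2 := by positivity
  have hβ : 0 ≤ ν / 2 := by positivity
  have hα' : 0 ≤ μ / 2 + 1 := by positivity
  have hβ' : 0 ≤ ν / 2 + 1 := by positivity
  have h₀ := hasDerivAt_besselMoment_comp hd hα hβ 0 ha hb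
  have h₁ := hasDerivAt_besselMoment_comp hd hα' hβ 1 ha hb
  have h₂ := hasDerivAt_besselMoment_comp hd hα hβ' 1 ha hb
  refine ⟨_, ha.mul (((h₀.const_mul _).sub
    (((((ha.pow 2).const_add 1).add (hb.pow 2)).div_const 4).mul h₁)).sub
    (((hb.pow 2).div_const 2).mul h₂)), ?_⟩
  have r₁ := besselMoment_succ_add_two_left hd hα hβ 1 (a ϑ) (b ϑ)
  have r₂ := besselMoment_succ_add_two_right hd hα hβ 1 (a ϑ) (b ϑ)
  rw [add_assoc (μ / 2), add_assoc (ν / 2), one_add_one_eq_two, slopeMoment]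
  simp only [Pi.add_apply, Pi.pow_apply]
  norm_num only at r₁ r₂ ⊢
  linear_combination (-a ϑ / 4) * hrel (a ϑ) (b ϑ)
    + a ϑ * ((1 + a ϑ ^ 2 + b ϑ ^ 2) / 2) ^ 2 * r₁ + a ϑ * (a ϑ ^ 2 * b ϑ ^ 2) * r₂

lemma MomentRelation.isAngularSolution (hrel : MomentRelation d μ ν l) (hd : HasMoments d)
    (hμ : 0 ≤ μ) (hν : 0 ≤ ν) (φ : ℝ) :
    IsAngularSolution (μ + 1) (l / 4) {ϑ | cos ϑ + cos φ ≠ 0} (angularTransform d μ ν φ)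
      fun ϑ ↦ (cos ϑ + cos φ) ^ (-((μ + ν + 2) / 2)) *
        slopeMoment d μ ν (angleRatio ϑ φ) (angleRatio φ ϑ) := by
  intro ϑ h
  obtain ⟨k', hk', hode⟩ := hrel.exists_hasDerivAt_slopeMoment hd hμ hν
    (a := fun ϑ ↦ angleRatio ϑ φ) (b := fun ϑ ↦ angleRatio φ ϑ)
    (hasDerivAt_angleRatio_left h) (hasDerivAt_angleRatio_right h)
  refine ⟨hasDerivAt_angularTransform hd hμ hν h, _,
    (hasDerivAt_cos_add_cos_rpow_neg h _).mul hk', ?_⟩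
  rw [angularTransform]
  set c := (cos ϑ + cos φ) ^ (-((μ + ν + 2) / 2))
  set a := angleRatio ϑ φ
  set K := slopeMoment d μ ν a (angleRatio φ ϑ)
  set M := besselMoment d 0 (μ / 2) (ν / 2) a (angleRatio φ ϑ)
  linear_combination (cos ϑ + cos φ) * c * hode
    + c * ((μ + ν + 2) / 2 * a * K + k' + l / 4 * M) * sin_eq_mul_angleRatio h
    + (μ + 1) * (c * K) * cos_eq_mul_angleRatio h

end AngularTransform

section AngularUniqueness

variable {m κ T : ℝ} {Z W Z₁ W₁ Z₂ W₂ : ℝ → ℝ}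

lemma IsAngularSolution.mono {s t : Set ℝ} (h : IsAngularSolution m κ s Z W) (hts : t ⊆ s) :
    IsAngularSolution m κ t Z W := fun x hx ↦ h x (hts hx)

lemma IsAngularSolution.const_mul_sub {s : Set ℝ} (h₁ : IsAngularSolution m κ s Z₁ W₁)
    (h₂ : IsAngularSolution m κ s Z₂ W₂) (c₁ c₂ : ℝ) :
    IsAngularSolution m κ s (fun x ↦ c₁ * Z₁ x - c₂ * Z₂ x) fun x ↦ c₁ * W₁ x - c₂ * W₂ x := by
  intro x hx
  obtain ⟨hZ₁, w₁, hW₁, e₁⟩ := h₁ x hx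
  obtain ⟨hZ₂, w₂, hW₂, e₂⟩ := h₂ x hx
  refine ⟨(hZ₁.const_mul c₁).sub (hZ₂.const_mul c₂), _,
    (hW₁.const_mul c₁).sub (hW₂.const_mul c₂), ?_⟩
  linear_combination c₁ * e₁ - c₂ * e₂

lemma sin_mul_neg_cos_le_sin {x : ℝ} (hx : 0 ≤ x) (hxT : x ≤ T) (hT : T ≤ π) :
    sin T * -cos x ≤ sin x := by
  have hsub : 0 ≤ sin (T - x) := sin_nonneg_of_nonneg_of_le_pi (by linarith) (by linarith)
  have hx_sin : 0 ≤ sin x := sin_nonneg_of_nonneg_of_le_pi hx (hxT.trans hT)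
  rw [sin_sub] at hsub
  nlinarith [neg_one_le_cos T]

-- The singular term is harmless: near `x = 0` it damps `W`, and up to `T < π` the negative part of
-- `cot x` is at most `1 / sin T`.
lemma mul_le_of_angular_equation (hm : 0 ≤ m) {x y z y' : ℝ} (hx : 0 < x) (hxT : x ≤ T)
    (hT : T < π) (h : sin x * y' + m * cos x * y + κ * sin x * z = 0) :
    y * y' ≤ m / sin T * y ^ 2 + |κ| / 2 * (y ^ 2 + z ^ 2) := by
  have hsT : 0 < sin T := sin_pos_of_pos_of_lt_pi (hx.trans_le hxT) hT
  have hsx : 0 < sin x := sin_pos_of_pos_of_lt_pi hx (hxT.trans_lt hT)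
  have hcot : -cos x ≤ sin x / sin T :=
    (le_div_iff₀' hsT).2 (sin_mul_neg_cos_le_sin hx.le hxT hT.le)
  have hdamp : m * -cos x * y ^ 2 ≤ m * (sin x / sin T) * y ^ 2 := by gcongr
  have hyz : |z * y| ≤ (y ^ 2 + z ^ 2) / 2 :=
    abs_le.2 ⟨by nlinarith [sq_nonneg (z + y)], by nlinarith [sq_nonneg (z - y)]⟩
  have hκ : -(κ * (z * y)) ≤ |κ| * ((y ^ 2 + z ^ 2) / 2) :=
    (neg_le_abs _).trans (by rw [abs_mul]; gcongr)
  refine le_of_mul_le_mul_left ?_ hsx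
  calc sin x * (y * y') = m * -cos x * y ^ 2 + sin x * -(κ * (z * y)) := by
        linear_combination y * h
    _ ≤ m * (sin x / sin T) * y ^ 2 + sin x * (|κ| * ((y ^ 2 + z ^ 2) / 2)) := by gcongr
    _ = sin x * (m / sin T * y ^ 2 + |κ| / 2 * (y ^ 2 + z ^ 2)) := by ring

lemma IsAngularSolution.antitoneOn_energy (hm : 0 ≤ m) (hT : T < π)
    (h : IsAngularSolution m κ (Icc 0 T) Z W) :
    AntitoneOn (fun x ↦ exp (-(2 * (m / sin T) + |κ| + 1) * x) * (W x ^ 2 + Z x ^ 2))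
      (Icc 0 T) := by
  set L := 2 * (m / sin T) + |κ| + 1 with hL
  choose! hZ w hW hode using h
  have hderiv : ∀ x ∈ Icc 0 T, HasDerivAt (fun x ↦ exp (-L * x) * (W x ^ 2 + Z x ^ 2))
      (exp (-L * x) * (2 * (W x * w x) + 2 * (Z x * W x) - L * (W x ^ 2 + Z x ^ 2))) x := by
    intro x hx
    refine ((((hasDerivAt_id x).const_mul (-L)).exp).mul
      (((hW x hx).pow 2).add ((hZ x hx).pow 2))).congr_deriv ?_
    simp only [Pi.add_apply, Pi.pow_apply, id, mul_one]
    norm_num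
    ring
  refine antitoneOn_of_hasDerivWithinAt_nonpos (convex_Icc 0 T)
    (fun x hx ↦ (hderiv x hx).continuousAt.continuousWithinAt)
    (fun x hx ↦ (hderiv x (interior_subset hx)).hasDerivWithinAt) fun x hx ↦ ?_
  have hx' := interior_subset hx
  rw [interior_Icc] at hx
  have hsT : 0 < sin T := sin_pos_of_pos_of_lt_pi (hx.1.trans hx.2) hT
  have hWw := mul_le_of_angular_equation hm hx.1 hx.2.le hT (hode x hx')
  have hmZ : 0 ≤ m / sin T * Z x ^ 2 := by positivity
  refine mul_nonpos_of_nonneg_of_nonpos (exp_pos _).le ?_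
  rw [hL]
  nlinarith [sq_nonneg (Z x - W x)]

lemma IsAngularSolution.eq_zero (hm : 0 < m) (hT₀ : 0 ≤ T) (hT : T < π)
    (h : IsAngularSolution m κ (Icc 0 T) Z W) (hZ : Z 0 = 0) : Z T = 0 := by
  have h₀ : (0 : ℝ) ∈ Icc 0 T := left_mem_Icc.2 hT₀
  have hW : W 0 = 0 := by
    obtain ⟨-, w', -, e⟩ := h 0 h₀
    simpa [hm.ne'] using e
  have henergy := h.antitoneOn_energy hm.le hT h₀ (right_mem_Icc.2 hT₀) hT₀
  simp only [hW, hZ, ne_eq, OfNat.ofNat_ne_zero, not_false_eq_true, zero_pow, add_zero,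
    mul_zero] at henergy
  have hsum := nonpos_of_mul_nonpos_right henergy (exp_pos _)
  exact pow_eq_zero_iff two_ne_zero |>.1 (by nlinarith [sq_nonneg (W T), sq_nonneg (Z T)])

end AngularUniqueness

/-! ### Gegenbauer polynomials -/

section DividedPower

/-- The divided power `(2 * x) ^ z / z!`, extended by `0` to negative `z`. With this convention the
derivative of the Gegenbauer sum can be taken termwise without boundary terms. -/
noncomputable def dividedPow (z : ℤ) (x : ℝ) : ℝ :=
  if z < 0 then 0 else (2 * x) ^ z.toNat / z.toNat.factorial

lemma dividedPow_of_neg {z : ℤ} (hz : z < 0) (x : ℝ) : dividedPow z x = 0 := if_pos hz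

lemma dividedPow_natCast (n : ℕ) (x : ℝ) : dividedPow n x = (2 * x) ^ n / n.factorial := by
  simp [dividedPow]

lemma two_mul_dividedPow_sub_one (z : ℤ) (x : ℝ) :
    2 * x * dividedPow (z - 1) x = z * dividedPow z x := by
  rcases lt_or_ge z 0 with hz | hz
  · rw [dividedPow_of_neg hz, dividedPow_of_neg (by lia), mul_zero, mul_zero]
  lift z to ℕ using hz
  rcases z with - | n
  · simp [dividedPow_of_neg]
  rw [Nat.cast_succ, add_sub_cancel_right, ← Nat.cast_succ, dividedPow_natCast, dividedPow_natCast,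
    Nat.factorial_succ, pow_succ']
  push_cast
  field_simp

lemma hasDerivAt_dividedPow (z : ℤ) (x : ℝ) :
    HasDerivAt (dividedPow z) (2 * dividedPow (z - 1) x) x := by
  rcases lt_or_ge z 0 with hz | hz
  · rw [funext (dividedPow_of_neg hz), dividedPow_of_neg (by lia), mul_zero]
    exact hasDerivAt_const x 0
  lift z to ℕ using hz
  rw [funext (dividedPow_natCast z)]
  refine ((((hasDerivAt_id x).const_mul 2).pow z).div_const _).congr_deriv ?_
  rcases z with - | n
  · simp [dividedPow_of_neg]
  have hz : ((n + 1 : ℕ) : ℤ) - 1 = n := by push_cast; ring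
  rw [hz, dividedPow_natCast, Nat.factorial_succ, add_tsub_cancel_right, id]
  push_cast
  field_simp

end DividedPower

section Gegenbauer

variable {l : ℝ}

/-- The coefficient of `dividedPow (n - 2 * k) x` in `gegenbauerCt n l x`. -/
noncomputable def gegenbauerCoeff (n : ℕ) (l : ℝ) (k : ℕ) : ℝ :=
  (-1) ^ k * Gamma (l + n - k) / k.factorial

lemma gegenbauerCt_eq_sum {n N : ℕ} (hN : n < 2 * N) (l x : ℝ) :
    gegenbauerCt n l x =
      ∑ k ∈ Finset.range N, gegenbauerCoeff n l k * dividedPow (n - 2 * k) x := by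
  have hsub : Finset.range (n / 2 + 1) ⊆ Finset.range N :=
    Finset.range_subset_range.2 (by lia)
  rw [gegenbauerCt, ← Finset.sum_subset hsub]
  · refine Finset.sum_congr rfl fun k hk ↦ ?_
    have hk' : 2 * k ≤ n := by have := Finset.mem_range.1 hk; lia
    have hcast : (n : ℤ) - 2 * k = (n - 2 * k : ℕ) := by push_cast [hk']; rfl
    rw [hcast, dividedPow_natCast, gegenbauerCoeff]
    field_simp
  · intro k _ hk
    rw [dividedPow_of_neg (by rw [Finset.mem_range] at hk; lia), mul_zero]

lemma hasDerivAt_gegenbauerCt_succ (n : ℕ) (l x : ℝ) :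
    HasDerivAt (gegenbauerCt (n + 1) l) (2 * gegenbauerCt n (l + 1) x) x := by
  rw [gegenbauerCt_eq_sum (N := n + 2) (by lia),
    funext (gegenbauerCt_eq_sum (show n + 1 < 2 * (n + 2) by lia) l)]
  refine (HasDerivAt.fun_sum fun k _ ↦ (hasDerivAt_dividedPow _ x).const_mul _).congr_deriv ?_
  rw [Finset.mul_sum]
  refine Finset.sum_congr rfl fun k _ ↦ ?_
  have hΓ : l + (n + 1 : ℕ) - k = l + 1 + n - k := by push_cast; ring
  have hz : ((n + 1 : ℕ) : ℤ) - 2 * k - 1 = n - 2 * k := by push_cast; ring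
  rw [gegenbauerCoeff, gegenbauerCoeff, hΓ, hz]
  ring

lemma gegenbauerCt_zero (l x : ℝ) : gegenbauerCt 0 l x = Gamma l := by
  simp [gegenbauerCt]

lemma gegenbauerCoeff_succ {n k : ℕ} (hl : 0 < l) (hk : k < n) :
    (k + 1) * (l + n - k - 1) * gegenbauerCoeff n l (k + 1) = -gegenbauerCoeff n l k := by
  have hkn : (k : ℝ) + 1 ≤ n := by exact_mod_cast hk
  have hΓ : Gamma (l + n - k) = (l + n - k - 1) * Gamma (l + n - k - 1) := by
    rw [← Gamma_add_one (by linarith)]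
    ring_nf
  rw [gegenbauerCoeff, gegenbauerCoeff, hΓ, Nat.factorial_succ]
  push_cast
  rw [← sub_sub]
  field_simp
  ring

-- Termwise the left side is a difference in `k`, so the sum telescopes.
lemma gegenbauerCoeff_mul_ode (hl : 0 < l) (n k : ℕ) (x : ℝ) :
    gegenbauerCoeff n l k * ((1 - x ^ 2) * (4 * dividedPow (n - 2 * k - 1 - 1) x)
      - (2 * l + 1) * x * (2 * dividedPow (n - 2 * k - 1) x)
      + n * (n + 2 * l) * dividedPow (n - 2 * k) x) =
    4 * k * (l + n - k) * gegenbauerCoeff n l k * dividedPow (n - 2 * k) x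
      - 4 * (k + 1 : ℕ) * (l + n - (k + 1 : ℕ)) * gegenbauerCoeff n l (k + 1) *
        dividedPow (n - 2 * (k + 1 : ℕ)) x := by
  have h₁ := two_mul_dividedPow_sub_one (n - 2 * k) x
  have h₂ := two_mul_dividedPow_sub_one (n - 2 * k - 1) x
  have hz : (n : ℤ) - 2 * (k + 1 : ℕ) = n - 2 * k - 1 - 1 := by push_cast; ring
  have hcoeff : ((k : ℝ) + 1) * (l + n - k - 1) * gegenbauerCoeff n l (k + 1) *
      dividedPow (n - 2 * k - 1 - 1) x =
      -gegenbauerCoeff n l k * dividedPow (n - 2 * k - 1 - 1) x := by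
    rcases lt_or_ge k n with hk | hk
    · rw [gegenbauerCoeff_succ hl hk]
    · rw [dividedPow_of_neg (by lia), mul_zero, mul_zero]
  rw [hz]
  push_cast at h₁ h₂ ⊢
  linear_combination 4 * hcoeff - gegenbauerCoeff n l k * (2 * l + 1) * h₁
    - gegenbauerCoeff n l k * (2 * x) * h₂ - gegenbauerCoeff n l k * (n - 2 * k - 1) * h₁

lemma exists_hasDerivAt_gegenbauerCt (hl : 0 < l) (n : ℕ) : ∃ y₁ y₂ : ℝ → ℝ,
    (∀ x, HasDerivAt (gegenbauerCt n l) (y₁ x) x) ∧ (∀ x, HasDerivAt y₁ (y₂ x) x) ∧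
      ∀ x, (1 - x ^ 2) * y₂ x - (2 * l + 1) * x * y₁ x
        + n * (n + 2 * l) * gegenbauerCt n l x = 0 := by
  have hsum := gegenbauerCt_eq_sum (show n < 2 * (n + 1) by lia) l
  refine ⟨fun x ↦ ∑ k ∈ Finset.range (n + 1),
      gegenbauerCoeff n l k * (2 * dividedPow (n - 2 * k - 1) x),
    fun x ↦ ∑ k ∈ Finset.range (n + 1),
      gegenbauerCoeff n l k * (2 * (2 * dividedPow (n - 2 * k - 1 - 1) x)),
    fun x ↦ ?_, fun x ↦ ?_, fun x ↦ ?_⟩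
  · rw [funext hsum]
    exact HasDerivAt.fun_sum fun k _ ↦ (hasDerivAt_dividedPow _ x).const_mul _
  · exact HasDerivAt.fun_sum fun k _ ↦
      ((hasDerivAt_dividedPow _ x).const_mul 2).const_mul _
  · set c : ℕ → ℝ := fun k ↦
      4 * k * (l + n - k) * gegenbauerCoeff n l k * dividedPow (n - 2 * k) x with hc
    have hlast : dividedPow (n - 2 * (n + 1 : ℕ)) x = 0 := dividedPow_of_neg (by lia) x
    calc _ = ∑ k ∈ Finset.range (n + 1), (c k - c (k + 1)) := by
          rw [hsum, Finset.mul_sum, Finset.mul_sum, Finset.mul_sum, ← Finset.sum_sub_distrib,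
            ← Finset.sum_add_distrib]
          refine Finset.sum_congr rfl fun k _ ↦ ?_
          rw [hc, ← gegenbauerCoeff_mul_ode hl]
          ring
      _ = 0 := by
          rw [Finset.sum_range_sub', hc]
          simp only [hlast, Nat.cast_zero, mul_zero, zero_mul, sub_zero]

lemma exists_isAngularSolution_gegenbauerCt {m : ℝ} (hm : 0 < m) (n : ℕ) (s : Set ℝ) :
    ∃ W, IsAngularSolution m (n * (n + m)) s (fun x ↦ gegenbauerCt n (m / 2) (cos x)) W := by
  obtain ⟨y₁, y₂, h₁, h₂, hode⟩ := exists_hasDerivAt_gegenbauerCt (half_pos hm) n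
  refine ⟨_, fun x _ ↦ ⟨(h₁ (cos x)).comp x (hasDerivAt_cos x), _,
    ((h₂ (cos x)).comp x (hasDerivAt_cos x)).mul (hasDerivAt_sin x).neg, ?_⟩⟩
  simp only [Function.comp_apply]
  linear_combination sin x * hode (cos x) + sin x * y₂ (cos x) * sin_sq_add_cos_sq x

-- Comparing both sides of the differential equation at `x = 1` relates `C_{n+1}^l(1)` to
-- `C_n^{l+1}(1)`.
lemma gegenbauerCt_one (n : ℕ) (hl : 0 < l) :
    gegenbauerCt n l 1 = Gamma l * Gamma (n + 2 * l) / (n.factorial * Gamma (2 * l)) := by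
  induction n generalizing l with
  | zero =>
    have : Gamma (2 * l) ≠ 0 := (Gamma_pos_of_pos (by positivity)).ne'
    rw [gegenbauerCt_zero, Nat.cast_zero, zero_add, Nat.factorial_zero]
    field_simp
    norm_num
  | succ n ih =>
    obtain ⟨y₁, y₂, h₁, -, hode⟩ := exists_hasDerivAt_gegenbauerCt hl (n + 1)
    have h := hode 1
    rw [(h₁ 1).unique (hasDerivAt_gegenbauerCt_succ n l 1), ih (by positivity)] at h
    have hΓ₁ : Gamma (l + 1) = l * Gamma l := Gamma_add_one hl.ne'
    have hΓ₂ : Gamma (2 * (l + 1)) = (2 * l + 1) * (2 * l * Gamma (2 * l)) := by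
      rw [← Gamma_add_one (by positivity), ← Gamma_add_one (by positivity)]
      ring_nf
    have hΓ₃ : Gamma (n + 2 * (l + 1)) = (n + 1 + 2 * l) * Gamma ((n + 1 : ℕ) + 2 * l) := by
      rw [Nat.cast_succ, ← Gamma_add_one (by positivity)]
      ring_nf
    have : Gamma (2 * l) ≠ 0 := (Gamma_pos_of_pos (by positivity)).ne'
    have hfac : (n : ℝ) + 1 + 2 * l ≠ 0 := by positivity
    rw [hΓ₁, hΓ₂, hΓ₃] at h
    rw [Nat.factorial_succ, eq_div_iff (by positivity), ← mul_right_inj' hfac]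
    push_cast at h ⊢
    field_simp at h
    linear_combination h

lemma gegenbauerCt_one_pos (n : ℕ) (hl : 0 < l) : 0 < gegenbauerCt n l 1 := by
  have : 0 < Gamma (2 * l) := Gamma_pos_of_pos (by positivity)
  have : 0 < Gamma (n + 2 * l) := Gamma_pos_of_pos (by positivity)
  have : 0 < Gamma l := Gamma_pos_of_pos hl
  rw [gegenbauerCt_one n hl]
  positivity

lemma gegenbauerCt_eq_taylor_one (n : ℕ) (l x : ℝ) :
    gegenbauerCt n l x = ∑ i ∈ Finset.range (n + 1),
      2 ^ i * gegenbauerCt (n - i) (l + i) 1 * (x - 1) ^ i / i.factorial := by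
  induction n generalizing l x with
  | zero => simp [gegenbauerCt_zero]
  | succ n ih =>
    set R : ℝ → ℝ := fun x ↦ ∑ i ∈ Finset.range (n + 1),
      2 ^ (i + 1) * gegenbauerCt (n - i) (l + (i + 1 : ℕ)) 1 * (x - 1) ^ (i + 1) /
        (i + 1).factorial with hR
    have hderiv (x : ℝ) : HasDerivAt R (2 * gegenbauerCt n (l + 1) x) x := by
      refine (HasDerivAt.fun_sum fun i _ ↦ ((((hasDerivAt_id x).sub_const 1).pow
        (i + 1)).const_mul _).div_const _).congr_deriv ?_
      rw [ih, Finset.mul_sum]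
      refine Finset.sum_congr rfl fun i _ ↦ ?_
      have hl : l + (i + 1 : ℕ) = l + 1 + i := by push_cast; ring
      rw [hl, Nat.factorial_succ, add_tsub_cancel_right, id]
      push_cast
      field_simp
      ring
    have hsub (x : ℝ) := (hasDerivAt_gegenbauerCt_succ n l x).sub (hderiv x)
    have hconst := is_const_of_deriv_eq_zero (fun x ↦ (hsub x).differentiableAt)
      (fun x ↦ (hsub x).deriv.trans (sub_self _)) x 1
    have hR1 : R 1 = 0 := by simp [hR]
    rw [Finset.sum_range_succ']
    simp only [Pi.sub_apply, hR1, sub_zero] at hconst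
    simp only [Nat.add_sub_add_right, pow_zero, one_mul, mul_one, Nat.sub_zero, Nat.cast_zero,
      add_zero, Nat.factorial_zero, Nat.cast_one, div_one]
    linear_combination hconst

lemma IsAngularSolution.mul_gegenbauerCt_one {m T : ℝ} {Z W : ℝ → ℝ} {n : ℕ} (hm : 0 < m)
    (hT₀ : 0 ≤ T) (hT : T < π) (h : IsAngularSolution m (n * (n + m)) (Icc 0 T) Z W) :
    Z T * gegenbauerCt n (m / 2) 1 = Z 0 * gegenbauerCt n (m / 2) (cos T) := by
  obtain ⟨V, hV⟩ := exists_isAngularSolution_gegenbauerCt hm n (Icc 0 T)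
  have := (h.const_mul_sub hV (gegenbauerCt n (m / 2) 1) (Z 0)).eq_zero hm hT₀ hT
    (by rw [cos_zero]; ring)
  linear_combination this

end Gegenbauer

section Factorization

variable {d : ℝ → ℝ} {μ ν ϑ φ : ℝ} {j n : ℕ}

lemma lt_pi_of_cos_add_cos_pos (hϑ : ϑ ∈ Icc 0 π) (h : 0 < cos ϑ + cos φ) : ϑ < π := by
  refine hϑ.2.lt_of_ne ?_
  rintro rfl
  rw [cos_pi] at h
  linarith [cos_le_one φ]

lemma angleRatio_zero_left (φ : ℝ) : angleRatio 0 φ = 0 := by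
  rw [angleRatio, sin_zero, zero_div]

lemma angularTransform_swap (d : ℝ → ℝ) (μ ν ϑ φ : ℝ) :
    angularTransform d μ ν φ ϑ = angularTransform d ν μ ϑ φ := by
  rw [angularTransform, angularTransform, besselMoment_swap, add_comm (cos ϑ), add_comm μ]

lemma MomentRelation.angularTransform_mul_gegenbauerCt_one (hμ : 0 ≤ μ) (hν : 0 ≤ ν)
    (hd : HasMoments d) (hrel : MomentRelation d μ ν (4 * j * (j + μ + 1)))
    (hϑ : ϑ ∈ Icc 0 π) (hpos : 0 < cos ϑ + cos φ) :
    angularTransform d μ ν φ ϑ * gegenbauerCt j ((μ + 1) / 2) 1 =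
      angularTransform d μ ν φ 0 * gegenbauerCt j ((μ + 1) / 2) (cos ϑ) := by
  have hϑπ := lt_pi_of_cos_add_cos_pos hϑ hpos
  have hκ : 4 * (j : ℝ) * (j + μ + 1) / 4 = j * (j + (μ + 1)) := by ring
  have hsub : Icc 0 ϑ ⊆ {x | cos x + cos φ ≠ 0} := by
    intro x hx
    have : cos ϑ ≤ cos x := cos_le_cos_of_nonneg_of_le_pi hx.1 hϑπ.le hx.2
    exact (by linarith : 0 < cos x + cos φ).ne'
  have hsol := (hrel.isAngularSolution hd hμ hν φ).mono hsub
  rw [hκ] at hsol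
  exact hsol.mul_gegenbauerCt_one (by positivity) hϑ.1 hϑπ

lemma MomentRelation.angularTransform_factorization (hμ : 0 ≤ μ) (hν : 0 ≤ ν)
    (hn : (n : ℝ) = j + (μ - ν) / 2) (hd : HasMoments d)
    (hrel : MomentRelation d μ ν (4 * j * (j + μ + 1))) (hϑ : ϑ ∈ Icc 0 π) (hφ : φ ∈ Icc 0 π)
    (hpos : 0 < cos ϑ + cos φ) :
    angularTransform d μ ν φ ϑ * gegenbauerCt j ((μ + 1) / 2) 1 * gegenbauerCt n ((ν + 1) / 2) 1 =
      angularTransform d μ ν 0 0 * gegenbauerCt j ((μ + 1) / 2) (cos ϑ) *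
        gegenbauerCt n ((ν + 1) / 2) (cos φ) := by
  have hswap : MomentRelation d ν μ (4 * n * (n + ν + 1)) := by
    convert hrel.swap using 1
    rw [hn]
    ring
  have hpos' : 0 < cos φ + cos 0 := by rw [cos_zero]; linarith [cos_le_one ϑ]
  have hstepϑ := hrel.angularTransform_mul_gegenbauerCt_one hμ hν hd hϑ hpos
  have hstepφ := hswap.angularTransform_mul_gegenbauerCt_one hν hμ hd hφ hpos'
  rw [angularTransform_swap d ν μ, angularTransform_swap d ν μ] at hstepφ
  linear_combination gegenbauerCt n ((ν + 1) / 2) 1 * hstepϑ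
    + gegenbauerCt j ((μ + 1) / 2) (cos ϑ) * hstepφ

lemma MomentRelation.besselMoment_mul_gegenbauerCt_one (hμ : 0 ≤ μ) (hν : 0 ≤ ν)
    (hn : (n : ℝ) = j + (μ - ν) / 2) (hd : HasMoments d)
    (hrel : MomentRelation d μ ν (4 * j * (j + μ + 1))) (hϑ : ϑ ∈ Icc 0 π) (hφ : φ ∈ Icc 0 π)
    (hpos : 0 < cos ϑ + cos φ) :
    besselMoment d 0 (μ / 2) (ν / 2) (angleRatio ϑ φ) (angleRatio φ ϑ) *
        gegenbauerCt j ((μ + 1) / 2) 1 * gegenbauerCt n ((ν + 1) / 2) 1 =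
      besselMoment d 0 (μ / 2) (ν / 2) 0 0 * ((cos ϑ + cos φ) / 2) ^ ((μ + ν + 2) / 2) *
        gegenbauerCt j ((μ + 1) / 2) (cos ϑ) * gegenbauerCt n ((ν + 1) / 2) (cos φ) := by
  have h := hrel.angularTransform_factorization hμ hν hn hd hϑ hφ hpos
  rw [angularTransform, angularTransform, angleRatio_zero_left, cos_zero, one_add_one_eq_two,
    rpow_neg hpos.le, rpow_neg zero_le_two] at h
  have : 0 < (cos ϑ + cos φ) ^ ((μ + ν + 2) / 2) := rpow_pos_of_pos hpos _
  have : (0 : ℝ) < 2 ^ ((μ + ν + 2) / 2) := by positivity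
  rw [div_rpow hpos.le zero_le_two]
  field_simp at h ⊢
  linear_combination h

end Factorization

/-! ### The constant -/

section BetaIntegral

-- Chu–Vandermonde, by Pascal's rule.
lemma sum_choose_mul_neg_one_pow_mul_Gamma_div_Gamma (n : ℕ) {x y : ℝ} (hx : 0 < x) (hy : 0 < y) :
    ∑ i ∈ Finset.range (n + 1), (n.choose i : ℝ) * ((-1) ^ i * (Gamma (x + i) / Gamma (y + i))) =
      Gamma x / Gamma (y + n) * (ascPochhammer ℝ n).eval (y - x) := by
  induction n generalizing x y with
  | zero => simp
  | succ n ih =>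
    have hshift (i : ℕ) : (-1) ^ (i + 1) * (Gamma (x + (i + 1 : ℕ)) / Gamma (y + (i + 1 : ℕ))) =
        -((-1) ^ i * (Gamma (x + 1 + i) / Gamma (y + 1 + i))) := by
      push_cast
      rw [add_assoc x, add_assoc y, add_comm 1 (i : ℝ)]
      ring
    have hΓx : Gamma (x + 1) = x * Gamma x := Gamma_add_one hx.ne'
    have hΓy : Gamma (y + n + 1) = (y + n) * Gamma (y + n) := Gamma_add_one (by positivity)
    have : Gamma (y + n) ≠ 0 := (Gamma_pos_of_pos (by positivity)).ne'
    have : y + n ≠ 0 := by positivity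
    rw [Finset.sum_choose_succ_mul
      (fun i _ ↦ (-1) ^ i * (Gamma (x + i) / Gamma (y + i)))]
    simp only [hshift, mul_neg, Finset.sum_neg_distrib]
    rw [ih hx hy, ih (by positivity) (by positivity), add_sub_add_right_eq_sub,
      ascPochhammer_succ_eval, Nat.cast_succ, ← add_assoc y, add_right_comm y, hΓx, hΓy]
    field_simp
    ring

variable {p q : ℝ}

lemma integral_Ioo_rpow_mul_one_sub_rpow (hp : 0 < p) (hq : 0 < q) :
    ∫ v in Ioo (0 : ℝ) 1, v ^ (p - 1) * (1 - v) ^ (q - 1) = ProbabilityTheory.beta p q := by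
  have hcast : ∀ v ∈ Ioo (0 : ℝ) 1, (v : ℂ) ^ ((p : ℂ) - 1) * (1 - v) ^ ((q : ℂ) - 1) =
      ((v ^ (p - 1) * (1 - v) ^ (q - 1) : ℝ) : ℂ) := by
    intro v hv
    push_cast [Complex.ofReal_cpow hv.1.le, Complex.ofReal_cpow (sub_pos.2 hv.2).le]
    rfl
  rw [ProbabilityTheory.beta_eq_betaIntegralReal p q hp hq, Complex.betaIntegral,
    intervalIntegral.integral_of_le zero_le_one, integral_Ioc_eq_integral_Ioo,
    setIntegral_congr_fun measurableSet_Ioo hcast, integral_complex_ofReal, Complex.ofReal_re]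

lemma hasDerivAt_sq_div_one_add_sq (a : ℝ) :
    HasDerivAt (fun a : ℝ ↦ a ^ 2 / (1 + a ^ 2)) (2 * a / (1 + a ^ 2) ^ 2) a := by
  refine ((hasDerivAt_pow 2 a).div ((hasDerivAt_pow 2 a).const_add 1)
    (by positivity)).congr_deriv ?_
  field_simp
  ring

lemma bijOn_sq_div_one_add_sq :
    BijOn (fun a : ℝ ↦ a ^ 2 / (1 + a ^ 2)) (Ioi 0) (Ioo 0 1) := by
  refine ⟨fun a (ha : 0 < a) ↦ ⟨by positivity, ?_⟩, fun a (ha : 0 < a) b (hb : 0 < b) hab ↦ ?_,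
    fun v ⟨hv₀, hv₁⟩ ↦ ?_⟩
  · rw [div_lt_one (by positivity)]
    linarith
  · rw [div_eq_div_iff (by positivity) (by positivity)] at hab
    exact (pow_left_inj₀ ha.le hb.le two_ne_zero).1 (by linarith)
  · have : 0 < 1 - v := sub_pos.2 hv₁
    refine ⟨√(v / (1 - v)), sqrt_pos.2 (by positivity), ?_⟩
    dsimp only
    rw [sq_sqrt (by positivity)]
    field_simp
    ring

-- The substitution `v = a ^ 2 / (1 + a ^ 2)`.
lemma integral_Ioi_rpow_mul_one_add_sq_rpow (hp : 0 < p) (hq : 0 < q) :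
    ∫ a in Ioi (0 : ℝ), a ^ (2 * p - 1) * (1 + a ^ 2) ^ (-(p + q)) =
      ProbabilityTheory.beta p q / 2 := by
  have hsubst : ∀ a ∈ Ioi (0 : ℝ), |2 * a / (1 + a ^ 2) ^ 2| •
      ((a ^ 2 / (1 + a ^ 2)) ^ (p - 1) * (1 - a ^ 2 / (1 + a ^ 2)) ^ (q - 1)) =
      2 * (a ^ (2 * p - 1) * (1 + a ^ 2) ^ (-(p + q))) := by
    intro a (ha : 0 < a)
    have hs : 0 < 1 + a ^ 2 := by positivity
    have hsub : 1 - a ^ 2 / (1 + a ^ 2) = (1 + a ^ 2)⁻¹ := by field_simp; ring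
    have ha₂ : (a ^ 2) ^ (p - 1) * a = a ^ (2 * p - 1) := by
      rw [← rpow_natCast, ← rpow_mul ha.le, ← rpow_add_one ha.ne']
      push_cast
      ring_nf
    have hexp : (1 + a ^ 2) ^ (-(p + q)) =
        (1 + a ^ 2) ^ (-(p - 1)) * (1 + a ^ 2) ^ (-(q - 1)) / (1 + a ^ 2) ^ 2 := by
      rw [← rpow_add hs, ← rpow_sub_natCast hs.ne']
      push_cast
      ring_nf
    rw [abs_of_pos (by positivity), smul_eq_mul, hsub, div_rpow (by positivity) hs.le,
      inv_rpow hs.le, hexp, ← ha₂, rpow_neg hs.le, rpow_neg hs.le]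
    ring
  have h := integral_Ioo_rpow_mul_one_sub_rpow hp hq
  rw [← bijOn_sq_div_one_add_sq.image_eq,
    integral_image_eq_integral_abs_deriv_smul measurableSet_Ioi
      (fun a _ ↦ (hasDerivAt_sq_div_one_add_sq a).hasDerivWithinAt)
      bijOn_sq_div_one_add_sq.injOn,
    setIntegral_congr_fun measurableSet_Ioi hsubst, integral_const_mul] at h
  linarith

lemma integrableOn_Ioi_rpow_mul_one_add_sq_rpow (hp : 0 < p) (hq : 0 < q) :
    IntegrableOn (fun a : ℝ ↦ a ^ (2 * p - 1) * (1 + a ^ 2) ^ (-(p + q))) (Ioi 0) := by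
  refine Integrable.of_integral_ne_zero ?_
  rw [integral_Ioi_rpow_mul_one_add_sq_rpow hp hq]
  exact (half_pos (ProbabilityTheory.beta_pos hp hq)).ne'

end BetaIntegral

section GegenbauerIntegral

variable {μ ν : ℝ}

/-- The restriction of the right-hand side to `φ = 0`, `ϑ = 2 * arctan a`, up to a constant. -/
noncomputable def gegenbauerProfile (j : ℕ) (μ ν a : ℝ) : ℝ :=
  (1 + a ^ 2) ^ (-((μ + ν + 2) / 2)) * gegenbauerCt j ((μ + 1) / 2) ((1 - a ^ 2) / (1 + a ^ 2))

lemma gegenbauerProfile_mul_rpow_eq_sum (j : ℕ) (μ ν : ℝ) {a : ℝ} (ha : 0 < a) :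
    gegenbauerProfile j μ ν a * a ^ (μ + 1) = ∑ i ∈ Finset.range (j + 1),
      (-4) ^ i * gegenbauerCt (j - i) ((μ + 1) / 2 + i) 1 / i.factorial *
        (a ^ (2 * (μ / 2 + 1 + i) - 1) * (1 + a ^ 2) ^ (-(μ / 2 + 1 + i + ν / 2))) := by
  have hs : 0 < 1 + a ^ 2 := by positivity
  have hx : (1 - a ^ 2) / (1 + a ^ 2) - 1 = -2 * a ^ 2 / (1 + a ^ 2) := by field_simp; ring
  rw [gegenbauerProfile, gegenbauerCt_eq_taylor_one, Finset.mul_sum, Finset.sum_mul]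
  refine Finset.sum_congr rfl fun i _ ↦ ?_
  have ha_exp : 2 * (μ / 2 + 1 + (i : ℝ)) - 1 = μ + 1 + (2 * i : ℕ) := by push_cast; ring
  have hs_exp : -(μ / 2 + 1 + (i : ℝ) + ν / 2) = -((μ + ν + 2) / 2) - i := by ring
  have hfour : (-4 : ℝ) ^ i = 2 ^ i * (-2) ^ i := by rw [← mul_pow]; norm_num
  rw [hx, ha_exp, hs_exp, rpow_add_natCast ha.ne', rpow_sub_natCast hs.ne', hfour, div_pow,
    mul_pow, pow_mul]
  ring

-- Legendre's duplication formula makes the half-integer shifts of `Gamma` disappear.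
lemma gegenbauerCt_one_mul_Gamma (n : ℕ) {l : ℝ} (hl : 0 < l) :
    gegenbauerCt n l 1 * Gamma (l + 1 / 2) =
      2 ^ (1 - 2 * l) * √π * Gamma (n + 2 * l) / n.factorial := by
  have hΓ : Gamma (2 * l) ≠ 0 := (Gamma_pos_of_pos (by positivity)).ne'
  calc gegenbauerCt n l 1 * Gamma (l + 1 / 2)
    _ = Gamma l * Gamma (l + 1 / 2) * (Gamma (n + 2 * l) / (n.factorial * Gamma (2 * l))) := by
        rw [gegenbauerCt_one n hl]
        ring
    _ = 2 ^ (1 - 2 * l) * √π * Gamma (n + 2 * l) / n.factorial := by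
        rw [Gamma_mul_Gamma_add_half]
        field_simp

lemma taylorCoeff_mul_beta {j i : ℕ} (hij : i ≤ j) (hμ : 0 ≤ μ) :
    (-4) ^ i * gegenbauerCt (j - i) ((μ + 1) / 2 + i) 1 / i.factorial *
        (ProbabilityTheory.beta (μ / 2 + 1 + i) (ν / 2) / 2) =
      2 ^ (-(μ + 1)) * √π * Gamma (ν / 2) / j.factorial *
        (j.choose i * ((-1) ^ i * (Gamma (j + μ + 1 + i) / Gamma ((μ + ν + 2) / 2 + i)))) := by
  have h := gegenbauerCt_one_mul_Gamma (j - i) (l := (μ + 1) / 2 + i) (by positivity)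
  have hl₁ : (μ + 1) / 2 + i + 1 / 2 = μ / 2 + 1 + i := by ring
  have hl₂ : ((j - i : ℕ) : ℝ) + 2 * ((μ + 1) / 2 + i) = j + μ + 1 + i := by
    rw [Nat.cast_sub hij]
    ring
  have hl₃ : μ / 2 + 1 + i + ν / 2 = (μ + ν + 2) / 2 + i := by ring
  have htwo : (2 : ℝ) ^ (1 - 2 * ((μ + 1) / 2 + i)) = 2 * 2 ^ (-(μ + 1)) / 4 ^ i := by
    have hexp : 1 - 2 * ((μ + 1) / 2 + (i : ℝ)) = -(μ + 1) + 1 - (2 * i : ℕ) := by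
      push_cast
      ring
    rw [hexp, rpow_sub_natCast two_ne_zero, rpow_add_one two_ne_zero, pow_mul]
    norm_num
    ring
  rw [hl₁, hl₂, htwo] at h
  rw [ProbabilityTheory.beta, hl₃, Nat.cast_choose ℝ hij, neg_pow]
  calc _ = (-1) ^ i * 4 ^ i / i.factorial * Gamma (ν / 2) / Gamma ((μ + ν + 2) / 2 + i) / 2 *
        (gegenbauerCt (j - i) ((μ + 1) / 2 + i) 1 * Gamma (μ / 2 + 1 + i)) := by ring
    _ = _ := by
        rw [h]
        field_simp

lemma integrableOn_gegenbauerProfile_mul_rpow (hμ : 0 ≤ μ) (hν : 0 < ν) (j : ℕ) :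
    IntegrableOn (fun a ↦ gegenbauerProfile j μ ν a * a ^ (μ + 1)) (Ioi 0) :=
  IntegrableOn.congr_fun (integrable_finsetSum _ fun i _ ↦
      (integrableOn_Ioi_rpow_mul_one_add_sq_rpow (by positivity) (half_pos hν)).const_mul _)
    (fun _ ha ↦ (gegenbauerProfile_mul_rpow_eq_sum j μ ν ha).symm) measurableSet_Ioi

lemma integral_gegenbauerProfile_mul_rpow (hμ : 0 ≤ μ) (hν : 0 < ν) (j : ℕ) :
    ∫ a in Ioi 0, gegenbauerProfile j μ ν a * a ^ (μ + 1) =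
      2 ^ (-(μ + 1)) * √π * Gamma (ν / 2) / j.factorial * (Gamma (j + μ + 1) /
        Gamma ((μ + ν + 2) / 2 + j) * (ascPochhammer ℝ j).eval ((ν - μ) / 2 - j)) := by
  have hchu := sum_choose_mul_neg_one_pow_mul_Gamma_div_Gamma j
    (by positivity : 0 < j + μ + 1) (by positivity : 0 < (μ + ν + 2) / 2)
  have hdiff : (μ + ν + 2) / 2 - (j + μ + 1) = (ν - μ) / 2 - j := by ring
  rw [setIntegral_congr_fun measurableSet_Ioi fun _ ha ↦
      gegenbauerProfile_mul_rpow_eq_sum j μ ν ha,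
    integral_finsetSum _ fun i _ ↦
      (integrableOn_Ioi_rpow_mul_one_add_sq_rpow (by positivity) (half_pos hν)).const_mul _,
    ← hdiff, ← hchu, Finset.mul_sum]
  refine Finset.sum_congr rfl fun i hi ↦ ?_
  rw [integral_const_mul, integral_Ioi_rpow_mul_one_add_sq_rpow (by positivity) (half_pos hν),
    taylorCoeff_mul_beta (Finset.mem_range_succ_iff.1 hi) hμ]

end GegenbauerIntegral

section HankelInversion

variable {α k r : ℝ} {d h g G : ℝ → ℝ} {B C : ℝ}

lemma integral_rpow_mul_exp_neg_mul_sq (hk : 0 < k) (hr : 0 < r) :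
    ∫ a in Ioi (0 : ℝ), a ^ (2 * r - 1) * exp (-k * a ^ 2) = k ^ (-r) * Gamma r / 2 := by
  have h := integral_rpow_mul_exp_neg_mul_rpow (p := 2) (q := 2 * r - 1) two_pos
    (by linarith) hk
  simp only [rpow_two] at h
  rw [h, sub_add_cancel, neg_div, mul_div_cancel_left₀ r two_ne_zero]
  ring

lemma integrableOn_rpow_two_mul_sub_one_mul_exp_neg_mul_sq (hk : 0 < k) (hr : 0 < r) :
    IntegrableOn (fun a : ℝ ↦ a ^ (2 * r - 1) * exp (-k * a ^ 2)) (Ioi 0) :=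
  integrableOn_rpow_mul_exp_neg_mul_sq hk (by linarith)

lemma integral_besselCoeff_mul_gaussian (hα : 0 ≤ α) (hk : 0 < k) (x : ℝ) (m : ℕ) :
    besselCoeff α m * (x / 2) ^ (2 * m) *
        ∫ a in Ioi (0 : ℝ), a ^ (2 * (m + α + 1) - 1) * exp (-k * a ^ 2) =
      k ^ (-(α + 1)) / 2 * ((-(x ^ 2 / (4 * k))) ^ m / m.factorial) := by
  have : Gamma (m + α + 1) ≠ 0 := (Gamma_pos_of_pos (by positivity)).ne'
  have hk_exp : k ^ (-(m + α + 1)) = k ^ (-(α + 1)) / k ^ m := by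
    rw [← rpow_sub_natCast hk.ne']
    ring_nf
  have hx : (x / 2) ^ (2 * m) = (x ^ 2 / (4 * k)) ^ m * k ^ m := by
    rw [pow_mul, ← mul_pow]
    congr 1
    field_simp
    norm_num
  rw [integral_rpow_mul_exp_neg_mul_sq hk (by positivity), besselCoeff, hk_exp, hx, neg_pow (_ / _)]
  field_simp

lemma integral_besselJt_mul_gaussian (hα : 0 ≤ α) (hk : 0 < k) (x : ℝ) :
    ∫ a in Ioi (0 : ℝ), besselJt α (a * x) * (a ^ (2 * α + 1) * exp (-k * a ^ 2)) =
      k ^ (-(α + 1)) / 2 * exp (-(x ^ 2 / (4 * k))) := by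
  set F : ℕ → ℝ → ℝ := fun m a ↦ besselCoeff α m * (x / 2) ^ (2 * m) *
    (a ^ (2 * (m + α + 1) - 1) * exp (-k * a ^ 2)) with hF
  have h_int (m : ℕ) : ∫ a in Ioi (0 : ℝ), F m a =
      k ^ (-(α + 1)) / 2 * ((-(x ^ 2 / (4 * k))) ^ m / m.factorial) := by
    rw [hF, integral_const_mul, integral_besselCoeff_mul_gaussian hα hk]
  have hnorm (m : ℕ) : ∫ a in Ioi (0 : ℝ), ‖F m a‖ = ‖∫ a in Ioi (0 : ℝ), F m a‖ := by
    have hpos : ∀ a ∈ Ioi (0 : ℝ), 0 ≤ a ^ (2 * (m + α + 1) - 1) * exp (-k * a ^ 2) :=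
      fun a (ha : 0 < a) ↦ by positivity
    have hpt : ∀ a ∈ Ioi (0 : ℝ), ‖F m a‖ = ‖besselCoeff α m * (x / 2) ^ (2 * m)‖ *
        (a ^ (2 * (m + α + 1) - 1) * exp (-k * a ^ 2)) :=
      fun a ha ↦ by rw [norm_mul, norm_of_nonneg (hpos a ha)]
    rw [setIntegral_congr_fun measurableSet_Ioi hpt, integral_const_mul, integral_const_mul,
      norm_mul _ (integral _ _), norm_of_nonneg (setIntegral_nonneg measurableSet_Ioi hpos)]
  have hsum := hasSum_integral_of_summable_integral_norm (μ := volume.restrict (Ioi 0)) (F := F)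
    (fun m ↦ (integrableOn_rpow_two_mul_sub_one_mul_exp_neg_mul_sq hk (by positivity)).const_mul _)
    (by simp only [hnorm, h_int]
        exact ((summable_pow_div_factorial _).mul_left _).norm)
  simp only [h_int] at hsum
  have hexp := (NormedSpace.expSeries_div_hasSum_exp (-(x ^ 2 / (4 * k)))).mul_left
    (k ^ (-(α + 1)) / 2)
  rw [← exp_eq_exp_ℝ] at hexp
  rw [← hsum.unique hexp]
  refine setIntegral_congr_fun measurableSet_Ioi fun a (ha : 0 < a) ↦ ?_
  have hser := (hasSum_besselJt hα (a * x)).mul_right (a ^ (2 * α + 1) * exp (-k * a ^ 2))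
  rw [← hser.tsum_eq]
  refine tsum_congr fun m ↦ ?_
  have ha_exp : 2 * (m + α + 1) - 1 = 2 * α + 1 + (2 * m : ℕ) := by push_cast; ring
  simp only [hF]
  rw [ha_exp, rpow_add_natCast ha.ne', mul_div_assoc, mul_pow]
  ring

lemma integral_besselTransform_mul_gaussian (hα : 0 ≤ α) (hk : 0 < k)
    (hd : IntegrableOn d (Ioi 0)) :
    ∫ a in Ioi (0 : ℝ), (∫ x in Ioi (0 : ℝ), d x * besselJt α (a * x)) *
        (a ^ (2 * α + 1) * exp (-k * a ^ 2)) =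
      ∫ x in Ioi (0 : ℝ), d x * (k ^ (-(α + 1)) / 2 * exp (-(x ^ 2 / (4 * k)))) := by
  have hgauss : IntegrableOn (fun a : ℝ ↦ a ^ (2 * α + 1) * exp (-k * a ^ 2)) (Ioi 0) :=
    integrableOn_rpow_mul_exp_neg_mul_sq hk (by linarith)
  have hJ : Measurable fun z : ℝ × ℝ ↦ besselJt α (z.1 * z.2) :=
    (continuous_besselJt hα).measurable.comp (measurable_fst.mul measurable_snd)
  have hprod := (hgauss.mul_prod hd).bdd_mul hJ.aestronglyMeasurable
    (ae_of_all _ fun _ ↦ abs_besselJt_le hα _)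
  calc _ = ∫ a in Ioi (0 : ℝ), ∫ x in Ioi (0 : ℝ),
        besselJt α (a * x) * (a ^ (2 * α + 1) * exp (-k * a ^ 2) * d x) := by
        simp only [← integral_mul_const]
        congr! 4
        ring
    _ = ∫ x in Ioi (0 : ℝ), ∫ a in Ioi (0 : ℝ),
        besselJt α (a * x) * (a ^ (2 * α + 1) * exp (-k * a ^ 2) * d x) :=
        integral_integral_swap hprod
    _ = _ := by
        simp only [← integral_besselJt_mul_gaussian hα hk, ← integral_const_mul]
        congr! 4
        ring

lemma tendsto_integral_mul_exp_neg_mul_sq (hG : IntegrableOn G (Ioi 0)) :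
    Tendsto (fun k : ℝ ↦ ∫ a in Ioi (0 : ℝ), G a * exp (-k * a ^ 2)) (𝓝[>] 0)
      (𝓝 (∫ a in Ioi (0 : ℝ), G a)) := by
  refine tendsto_integral_filter_of_dominated_convergence (fun a ↦ ‖G a‖) ?_ ?_ hG.norm ?_
  · exact Eventually.of_forall fun k ↦ hG.1.mul (by fun_prop)
  · filter_upwards [self_mem_nhdsWithin] with k (hk : 0 < k)
    refine ae_of_all _ fun a ↦ ?_
    rw [norm_mul, norm_of_nonneg (exp_pos _).le]
    refine mul_le_of_le_one_right (norm_nonneg _) (exp_le_one_iff.2 ?_)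
    rw [neg_mul, neg_nonpos]
    positivity
  · refine ae_of_all _ fun a ↦ ?_
    have hcont : Continuous fun k : ℝ ↦ G a * exp (-k * a ^ 2) := by fun_prop
    simpa using (hcont.tendsto 0).mono_left nhdsWithin_le_nhds

lemma tendsto_integral_comp_mul_left_mul (hh : ContinuousOn h (Ioi 0)) (hC : ∀ x > 0, |h x| ≤ C)
    (hB : Tendsto h (𝓝[>] 0) (𝓝 B)) (hg : IntegrableOn g (Ioi 0)) :
    Tendsto (fun e ↦ ∫ y in Ioi (0 : ℝ), h (e * y) * g y) (𝓝[>] 0)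
      (𝓝 (B * ∫ y in Ioi (0 : ℝ), g y)) := by
  rw [← integral_const_mul]
  refine tendsto_integral_filter_of_dominated_convergence (fun y ↦ C * ‖g y‖) ?_ ?_
    (hg.norm.const_mul C) ?_
  · filter_upwards [self_mem_nhdsWithin] with e (he : 0 < e)
    refine AEStronglyMeasurable.mul ?_ hg.1
    exact (hh.comp (by fun_prop) fun y (hy : 0 < y) ↦ mul_pos he hy).aestronglyMeasurable
      measurableSet_Ioi
  · filter_upwards [self_mem_nhdsWithin] with e (he : 0 < e)
    filter_upwards [ae_restrict_mem measurableSet_Ioi] with y (hy : 0 < y)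
    rw [norm_mul]
    exact mul_le_mul_of_nonneg_right (hC _ (mul_pos he hy)) (norm_nonneg _)
  · filter_upwards [ae_restrict_mem measurableSet_Ioi] with y (hy : 0 < y)
    refine (hB.comp (tendsto_nhdsWithin_iff.2 ⟨?_, ?_⟩)).mul_const _
    · have hcont : Continuous fun e : ℝ ↦ e * y := by fun_prop
      simpa using (hcont.tendsto 0).mono_left nhdsWithin_le_nhds
    · filter_upwards [self_mem_nhdsWithin] with e (he : 0 < e)
      exact mul_pos he hy

lemma integral_mul_gaussian_eq_rescaled (h : ℝ → ℝ) (α : ℝ) {e : ℝ} (he : 0 < e) :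
    ∫ x in Ioi (0 : ℝ), h x * x ^ (2 * α + 1) *
        ((e ^ 2 / 4) ^ (-(α + 1)) / 2 * exp (-(x ^ 2 / (4 * (e ^ 2 / 4))))) =
      4 ^ (α + 1) / 2 * ∫ y in Ioi (0 : ℝ), h (e * y) *
        (y ^ (2 * (α + 1) - 1) * exp (-1 * y ^ 2)) := by
  have hscale := integral_comp_mul_left_Ioi (fun x ↦ h x * x ^ (2 * α + 1) *
    ((e ^ 2 / 4) ^ (-(α + 1)) / 2 * exp (-(x ^ 2 / (4 * (e ^ 2 / 4)))))) 0 he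
  rw [mul_zero, smul_eq_mul, eq_inv_mul_iff_mul_eq₀ he.ne'] at hscale
  rw [← hscale, ← integral_const_mul, ← integral_const_mul]
  refine setIntegral_congr_fun measurableSet_Ioi fun y (hy : 0 < y) ↦ ?_
  have hpow : (e ^ 2 / 4) ^ (-(α + 1)) = 4 ^ (α + 1) / (e ^ (2 * α + 1) * e) := by
    rw [rpow_neg (by positivity), div_rpow (by positivity) (by norm_num), inv_div,
      ← rpow_natCast, ← rpow_mul he.le, ← rpow_add_one he.ne']
    push_cast
    ring_nf
  have hexp : -((e * y) ^ 2 / (4 * (e ^ 2 / 4))) = -1 * y ^ 2 := by field_simp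
  have hy_exp : 2 * (α + 1) - 1 = 2 * α + 1 := by ring
  have : 0 < e ^ (2 * α + 1) := rpow_pos_of_pos he _
  rw [hpow, hexp, hy_exp, mul_rpow he.le hy.le]
  field_simp

-- Hankel inversion at the origin, by Gaussian summation.
lemma integral_besselTransform_mul_rpow (hα : 0 ≤ α) (hh : ContinuousOn h (Ioi 0))
    (hC : ∀ x > 0, |h x| ≤ C) (hB : Tendsto h (𝓝[>] 0) (𝓝 B))
    (hd : IntegrableOn (fun x ↦ h x * x ^ (2 * α + 1)) (Ioi 0))
    (hG : IntegrableOn (fun a ↦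
      (∫ x in Ioi (0 : ℝ), h x * x ^ (2 * α + 1) * besselJt α (a * x)) * a ^ (2 * α + 1))
      (Ioi 0)) :
    ∫ a in Ioi (0 : ℝ), (∫ x in Ioi (0 : ℝ), h x * x ^ (2 * α + 1) * besselJt α (a * x)) *
      a ^ (2 * α + 1) = 4 ^ α * Gamma (α + 1) * B := by
  have hk : Tendsto (fun e : ℝ ↦ e ^ 2 / 4) (𝓝[>] 0) (𝓝[>] 0) := by
    refine tendsto_nhdsWithin_iff.2 ⟨?_, ?_⟩
    · have hcont : Continuous fun e : ℝ ↦ e ^ 2 / 4 := by fun_prop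
      simpa using (hcont.tendsto 0).mono_left nhdsWithin_le_nhds
    · filter_upwards [self_mem_nhdsWithin] with e (he : 0 < e)
      exact div_pos (pow_pos he 2) four_pos
  have hlim := (tendsto_integral_comp_mul_left_mul hh hC hB
    (integrableOn_rpow_two_mul_sub_one_mul_exp_neg_mul_sq one_pos
      (by positivity : 0 < α + 1))).const_mul (4 ^ (α + 1) / 2)
  rw [integral_rpow_mul_exp_neg_mul_sq one_pos (by positivity), one_rpow] at hlim
  have hvalue : 4 ^ α * Gamma (α + 1) * B =
      4 ^ (α + 1) / 2 * (B * (1 * Gamma (α + 1) / 2)) := by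
    rw [rpow_add_one four_ne_zero]
    ring
  rw [hvalue]
  refine tendsto_nhds_unique ((tendsto_integral_mul_exp_neg_mul_sq hG).comp hk) (hlim.congr' ?_)
  filter_upwards [self_mem_nhdsWithin] with e (he : 0 < e)
  rw [← integral_mul_gaussian_eq_rescaled h α he,
    ← integral_besselTransform_mul_gaussian hα (by positivity) hd]
  simp only [Function.comp_apply, mul_assoc]

end HankelInversion

section Constant

variable {μ ν a B C : ℝ} {j m : ℕ} {d u : ℝ → ℝ}

lemma ascPochhammer_eval_neg_add (j m : ℕ) :
    (ascPochhammer ℝ j).eval (-((j + m : ℕ) : ℝ)) =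
      (-1) ^ j * ((j + m).factorial / m.factorial) := by
  have h := Nat.factorial_mul_descFactorial (Nat.le_add_right j m)
  rw [Nat.add_sub_cancel_left] at h
  rw [ascPochhammer_eval_neg_eq_descPochhammer, descPochhammer_eval_eq_descFactorial, ← h,
    Nat.cast_mul, mul_div_cancel_left₀ _ (by positivity)]

lemma integral_gegenbauerProfile_mul_rpow_mul_Gamma (hν : 0 < ν) (hm : μ = ν + 2 * m) :
    (∫ a in Ioi 0, gegenbauerProfile j μ ν a * a ^ (μ + 1)) *
        (Gamma (ν / 2 + 1) * gegenbauerCt (j + m) ((ν + 1) / 2) 1) =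
      (-1) ^ j * (π * Gamma (ν / 2) * Gamma (j + μ + 1)) /
        (2 ^ (μ + ν + 1) * j.factorial * m.factorial) := by
  have hμ : 0 ≤ μ := by rw [hm]; positivity
  have : 0 < Gamma ((μ + ν + 2) / 2 + j) := Gamma_pos_of_pos (by positivity)
  have hCn := gegenbauerCt_one_mul_Gamma (j + m) (l := (ν + 1) / 2) (by positivity)
  have h₁ : (ν + 1) / 2 + 1 / 2 = ν / 2 + 1 := by ring
  have h₂ : 1 - 2 * ((ν + 1) / 2) = -ν := by ring
  have h₃ : ((j + m : ℕ) : ℝ) + 2 * ((ν + 1) / 2) = (μ + ν + 2) / 2 + j := by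
    rw [hm]; push_cast; ring
  have h₄ : (ν - μ) / 2 - j = -((j + m : ℕ) : ℝ) := by rw [hm]; push_cast; ring
  have htwo : (2 : ℝ) ^ (-(μ + 1)) * 2 ^ (-ν) = (2 ^ (μ + ν + 1))⁻¹ := by
    rw [← rpow_add two_pos, ← rpow_neg two_pos.le]
    ring_nf
  rw [h₁, h₂, h₃] at hCn
  rw [integral_gegenbauerProfile_mul_rpow hμ hν, mul_comm (Gamma (ν / 2 + 1)), hCn, h₄,
    ascPochhammer_eval_neg_add]
  calc _ = (-1) ^ j * (√π * √π * Gamma (ν / 2) * Gamma (j + μ + 1)) *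
        (2 ^ (-(μ + 1)) * 2 ^ (-ν)) / (j.factorial * m.factorial) := by field_simp
    _ = _ := by
        rw [mul_self_sqrt pi_pos.le, htwo]
        field_simp

lemma besselMoment_zero_right (d : ℝ → ℝ) (α β a : ℝ) :
    besselMoment d 0 α β a 0 =
      (∫ x in Ioi (0 : ℝ), d x * besselJt α (a * x)) / Gamma (β + 1) := by
  simp only [besselMoment, mul_zero, pow_zero, mul_one, zero_mul, besselJt_apply_zero,
    mul_one_div, integral_div]

lemma cos_two_mul_arctan (a : ℝ) : cos (2 * arctan a) = (1 - a ^ 2) / (1 + a ^ 2) := by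
  rw [cos_two_mul, cos_sq_arctan]
  field_simp
  ring

lemma angleRatio_two_mul_arctan_zero (a : ℝ) : angleRatio (2 * arctan a) 0 = a := by
  have hcos : cos (arctan a) ≠ 0 := (cos_arctan_pos a).ne'
  rw [angleRatio, cos_zero, sin_two_mul, cos_two_mul, sub_add_cancel]
  nth_rw 4 [← tan_arctan a]
  rw [tan_eq_sin_div_cos]
  field_simp

lemma MomentRelation.integral_mul_besselJt_mul_gegenbauerCt_one (hμ : 0 ≤ μ) (hν : 0 ≤ ν)
    (hd : HasMoments d) (hrel : MomentRelation d μ ν (4 * j * (j + μ + 1))) (ha : 0 ≤ a) :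
    (∫ x in Ioi (0 : ℝ), d x * besselJt (μ / 2) (a * x)) * gegenbauerCt j ((μ + 1) / 2) 1 =
      besselMoment d 0 (μ / 2) (ν / 2) 0 0 * Gamma (ν / 2 + 1) * gegenbauerProfile j μ ν a := by
  have hsum : cos (2 * arctan a) + cos 0 = 2 / (1 + a ^ 2) := by
    rw [cos_two_mul_arctan, cos_zero]
    field_simp
    ring
  have hϑ : 2 * arctan a ∈ Icc 0 π :=
    ⟨mul_nonneg two_pos.le (arctan_nonneg.2 ha), by linarith [arctan_lt_pi_div_two a]⟩
  have h := hrel.angularTransform_mul_gegenbauerCt_one hμ hν hd hϑ (φ := 0)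
    (by rw [hsum]; positivity)
  have : 0 < (2 : ℝ) ^ (-((μ + ν + 2) / 2)) := by positivity
  have : 0 < (1 + a ^ 2) ^ (-((μ + ν + 2) / 2)) := by positivity
  have : 0 < Gamma (ν / 2 + 1) := Gamma_pos_of_pos (by positivity)
  rw [angularTransform, angularTransform, hsum, angleRatio_two_mul_arctan_zero,
    angleRatio_zero_left, angleRatio_zero_left, cos_zero, one_add_one_eq_two,
    cos_two_mul_arctan, div_rpow two_pos.le (by positivity), besselMoment_zero_right] at h
  rw [gegenbauerProfile]
  field_simp at h ⊢
  linear_combination h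

lemma abs_rpow_mul_le {x : ℝ} (hC : ∀ x > 0, |u x| ≤ C * (x ^ (-ν) * exp (-x / 4)))
    (hx : 0 < x) : |x ^ ν * u x| ≤ C := by
  have hC₀ : 0 ≤ C := nonneg_of_mul_nonneg_left ((abs_nonneg _).trans (hC x hx)) (by positivity)
  rw [abs_mul, abs_of_pos (rpow_pos_of_pos hx ν)]
  calc x ^ ν * |u x| ≤ x ^ ν * (C * (x ^ (-ν) * exp (-x / 4))) := by gcongr; exact hC x hx
    _ = C * exp (-x / 4) := by
        rw [rpow_neg hx.le]
        field_simp
    _ ≤ C := mul_le_of_le_one_right hC₀ (exp_le_one_iff.2 (by linarith))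

-- Hankel inversion at the origin, applied to the transform known explicitly on the line `b = 0`.
lemma besselMoment_zero_zero_mul_integral (hμ : 0 < μ) (hν : 0 < ν)
    (hu : ContinuousOn u (Ioi 0)) (hC : ∀ x > 0, |u x| ≤ C * (x ^ (-ν) * exp (-x / 4)))
    (hB : Tendsto (fun x ↦ x ^ ν * u x) (𝓝[>] 0) (𝓝 B))
    (hrel : MomentRelation (fun x ↦ u x * x ^ (μ + ν + 1)) μ ν (4 * j * (j + μ + 1))) :
    besselMoment (fun x ↦ u x * x ^ (μ + ν + 1)) 0 (μ / 2) (ν / 2) 0 0 * Gamma (ν / 2 + 1) *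
        ∫ a in Ioi 0, gegenbauerProfile j μ ν a * a ^ (μ + 1) =
      2 ^ μ * Gamma (μ / 2 + 1) * B * gegenbauerCt j ((μ + 1) / 2) 1 := by
  have hd := hasMoments_mul_rpow hμ hu hC
  set I₀ := besselMoment (fun x ↦ u x * x ^ (μ + ν + 1)) 0 (μ / 2) (ν / 2) 0 0
  have hc : gegenbauerCt j ((μ + 1) / 2) 1 ≠ 0 := (gegenbauerCt_one_pos j (by positivity)).ne'
  have hdens : EqOn (fun x ↦ u x * x ^ (μ + ν + 1))
      (fun x ↦ x ^ ν * u x * x ^ (2 * (μ / 2) + 1)) (Ioi 0) := by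
    intro x (hx : 0 < x)
    have hexp : μ + ν + 1 = ν + (2 * (μ / 2) + 1) := by ring
    dsimp only
    rw [hexp, rpow_add hx]
    ring
  have htransform : EqOn
      (fun a ↦ I₀ * Gamma (ν / 2 + 1) / gegenbauerCt j ((μ + 1) / 2) 1 *
        (gegenbauerProfile j μ ν a * a ^ (μ + 1)))
      (fun a ↦ (∫ x in Ioi (0 : ℝ), x ^ ν * u x * x ^ (2 * (μ / 2) + 1) *
        besselJt (μ / 2) (a * x)) * a ^ (2 * (μ / 2) + 1)) (Ioi 0) := by
    intro a (ha : 0 < a)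
    have h := hrel.integral_mul_besselJt_mul_gegenbauerCt_one hμ.le hν.le hd ha.le
    rw [setIntegral_congr_fun measurableSet_Ioi
      fun x hx ↦ congrArg (· * besselJt (μ / 2) (a * x)) (hdens hx)] at h
    dsimp only
    rw [div_mul_eq_mul_div, ← mul_assoc (I₀ * _), ← h]
    field_simp
  have hcont : ContinuousOn (fun x ↦ x ^ ν * u x) (Ioi 0) :=
    (continuousOn_id.rpow_const fun x hx ↦ Or.inl (ne_of_gt hx)).mul hu
  have hHankel := integral_besselTransform_mul_rpow (by positivity) hcont
    (fun x ↦ abs_rpow_mul_le hC) hB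
    (IntegrableOn.congr_fun (by simpa using hd 0) hdens measurableSet_Ioi)
    (IntegrableOn.congr_fun ((integrableOn_gegenbauerProfile_mul_rpow hμ.le hν j).const_mul _)
      htransform measurableSet_Ioi)
  have hfour : (4 : ℝ) ^ (μ / 2) = 2 ^ μ := by
    rw [← mul_div_cancel₀ μ two_ne_zero, rpow_mul two_pos.le]
    norm_num
  rw [← setIntegral_congr_fun measurableSet_Ioi htransform, integral_const_mul, hfour] at hHankel
  rw [← hHankel]
  field_simp

lemma besselMoment_zero_zero_eq (hν : 0 < ν) (hm : μ = ν + 2 * m)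
    (hu : ContinuousOn u (Ioi 0)) (hC : ∀ x > 0, |u x| ≤ C * (x ^ (-ν) * exp (-x / 4)))
    (hB : Tendsto (fun x ↦ x ^ ν * u x) (𝓝[>] 0) (𝓝 B))
    (hrel : MomentRelation (fun x ↦ u x * x ^ (μ + ν + 1)) μ ν (4 * j * (j + μ + 1))) :
    besselMoment (fun x ↦ u x * x ^ (μ + ν + 1)) 0 (μ / 2) (ν / 2) 0 0 =
      (-1) ^ j * (j.factorial * 2 ^ (2 * μ + ν) * Gamma ((μ + 2) / 2) * m.factorial) /
        (π * Gamma (j + μ + 1)) * (2 / Gamma (ν / 2)) * B *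
        gegenbauerCt j ((μ + 1) / 2) 1 * gegenbauerCt (j + m) ((ν + 1) / 2) 1 := by
  have hμ : 0 < μ := by rw [hm]; positivity
  have h₁ := besselMoment_zero_zero_mul_integral hμ hν hu hC hB hrel
  have h₂ := integral_gegenbauerProfile_mul_rpow_mul_Gamma (j := j) hν hm
  have hsign : ((-1 : ℝ) ^ j) * (-1) ^ j = 1 := by rw [← mul_pow]; norm_num
  have htwo : (2 : ℝ) ^ (2 * μ + ν) * 2 = 2 ^ μ * 2 ^ (μ + ν + 1) := by
    rw [← rpow_add two_pos, ← rpow_add_one two_ne_zero]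
    ring_nf
  have hμ₂ : (μ + 2) / 2 = μ / 2 + 1 := by ring
  set I₀ := besselMoment (fun x ↦ u x * x ^ (μ + ν + 1)) 0 (μ / 2) (ν / 2) 0 0
  set P := ∫ a in Ioi 0, gegenbauerProfile j μ ν a * a ^ (μ + 1)
  have : 0 < Gamma (ν / 2) := Gamma_pos_of_pos (by positivity)
  have : 0 < Gamma (j + μ + 1) := Gamma_pos_of_pos (by positivity)
  have hI₀ : I₀ * ((-1) ^ j * (π * Gamma (ν / 2) * Gamma (j + μ + 1)) /
      (2 ^ (μ + ν + 1) * j.factorial * m.factorial)) = 2 ^ μ * Gamma (μ / 2 + 1) * B *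
        gegenbauerCt j ((μ + 1) / 2) 1 * gegenbauerCt (j + m) ((ν + 1) / 2) 1 := by
    rw [← h₁, ← h₂]
    ring
  calc I₀
    _ = (-1) ^ j * (-1) ^ j * I₀ := by rw [hsign, one_mul]
    _ = (-1) ^ j * (j.factorial * m.factorial * 2 ^ (μ + ν + 1)) /
          (π * Gamma (j + μ + 1) * Gamma (ν / 2)) *
        (I₀ * ((-1) ^ j * (π * Gamma (ν / 2) * Gamma (j + μ + 1)) /
          (2 ^ (μ + ν + 1) * j.factorial * m.factorial))) := by field_simp
    _ = (-1) ^ j * (j.factorial * (2 ^ (2 * μ + ν) * 2) * Gamma (μ / 2 + 1) * m.factorial) /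
          (π * Gamma (j + μ + 1) * Gamma (ν / 2)) * B *
        gegenbauerCt j ((μ + 1) / 2) 1 * gegenbauerCt (j + m) ((ν + 1) / 2) 1 := by
        rw [hI₀, htwo]
        ring
    _ = _ := by
        rw [hμ₂]
        ring

end Constant

theorem theoremB_nu_pos_general {μ ν : ℝ} {m : ℕ} (hν : 0 < ν) (hm : μ = ν + 2 * m) {j : ℕ}
    {u : ℝ → ℝ} (hu : IsEigenfunction μ ν (4 * j * (j + μ + 1)) u)
    (hL : IntegrableOn (fun x ↦ u x ^ 2 * x ^ (μ + ν + 1)) (Ioi 0)) {B : ℝ}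
    (hB : Tendsto (fun x ↦ x ^ ν * u x) (𝓝[>] 0) (𝓝 B)) {ϑ φ : ℝ} (hϑ : ϑ ∈ Icc 0 π)
    (hφ : φ ∈ Icc 0 π) (hpos : 0 < cos ϑ + cos φ) :
    ∫ x in Ioi (0 : ℝ), u x * besselJt (μ / 2) (sin ϑ / (cos ϑ + cos φ) * x) *
        besselJt (ν / 2) (sin φ / (cos ϑ + cos φ) * x) * x ^ (μ + ν + 1) =
      ((-1) ^ j * (j.factorial * 2 ^ (2 * μ + ν) * Gamma ((μ + 2) / 2) *
          Gamma ((μ - ν + 2) / 2) * Gamma (j + (μ - ν + 2) / 2)) /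
        (Gamma (j + (μ - ν + 2) / 2) * π * Gamma (j + μ + 1)) * (2 / Gamma (ν / 2)) * B) *
      ((cos ϑ + cos φ) / 2) ^ ((μ + ν + 2) / 2) * gegenbauerCt j ((μ + 1) / 2) (cos ϑ) *
      gegenbauerCt (j + m) ((ν + 1) / 2) (cos φ) := by
  have hμ : 0 < μ := by rw [hm]; positivity
  have hm₁ : (μ - ν + 2) / 2 = m + 1 := by rw [hm]; ring
  have hn : ((j + m : ℕ) : ℝ) = j + (μ - ν) / 2 := by rw [hm]; push_cast; ring
  have hΓ : Gamma (j + (m + 1)) ≠ 0 := (Gamma_pos_of_pos (by positivity)).ne'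
  have hcont := hu.contDiffOn.continuousOn
  obtain ⟨C, hC⟩ := exists_abs_le_rpow_mul_exp hcont
    (hu.isBigO_exp_neg_half (by positivity) hL) hB
  have hrel := hu.momentRelation hμ hν.le hC
  have hfactor := hrel.besselMoment_mul_gegenbauerCt_one hμ.le hν.le hn
    (hasMoments_mul_rpow hμ hcont hC) hϑ hφ hpos
  rw [besselMoment_zero_zero_eq hν hm hcont hC hB hrel] at hfactor
  have hCj := gegenbauerCt_one_pos j (by positivity : 0 < (μ + 1) / 2)
  have hCn := gegenbauerCt_one_pos (j + m) (by positivity : 0 < (ν + 1) / 2)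
  calc _ = besselMoment (fun x ↦ u x * x ^ (μ + ν + 1)) 0 (μ / 2) (ν / 2)
        (angleRatio ϑ φ) (angleRatio φ ϑ) := by
        simp only [besselMoment, angleRatio, mul_zero, pow_zero, mul_one, add_comm (cos φ),
          mul_right_comm _ _ (_ ^ (μ + ν + 1))]
    _ = _ := by
        refine mul_right_cancel₀ (mul_pos hCj hCn).ne' ?_
        rw [← mul_assoc, hfactor, hm₁, Gamma_nat_eq_factorial]
        field_simp

/-- **Theorem B, case `ν > 0`.** -/
theorem theoremB_nu_pos (μ ν : ℤ) (hcond : IntCond μ ν) (hν : 0 < ν) (j : ℕ) (u : ℝ → ℝ)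
    (hu_smooth : ContDiffOn ℝ (⊤ : ℕ∞) u (Set.Ioi 0))
    (hu_L2 : MeasureTheory.IntegrableOn
      (fun x => u x ^ 2 * x ^ ((μ : ℝ) + ν + 1)) (Set.Ioi 0))
    (hu_eig : ∀ x > (0 : ℝ), Dop μ ν u x = 4 * j * (j + (μ : ℝ) + 1) * u x)
    (B : ℝ) (hB : Filter.Tendsto (fun x : ℝ => x ^ (ν : ℝ) * u x)
      (nhdsWithin 0 (Set.Ioi 0)) (nhds B)) :
    ∀ ϑ ∈ Set.Icc (0 : ℝ) Real.pi, ∀ φ ∈ Set.Icc (0 : ℝ) Real.pi,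
      Real.cos ϑ + Real.cos φ > 0 →
      ∫ x in Set.Ioi (0 : ℝ),
          u x * besselJt ((μ : ℝ) / 2) (Real.sin ϑ / (Real.cos ϑ + Real.cos φ) * x)
            * besselJt ((ν : ℝ) / 2) (Real.sin φ / (Real.cos ϑ + Real.cos φ) * x)
            * x ^ ((μ : ℝ) + ν + 1)
        = ((-1) ^ j * (j.factorial * (2 : ℝ) ^ (2 * (μ : ℝ) + ν)
                * Real.Gamma (((μ : ℝ) + 2) / 2) * Real.Gamma (((μ : ℝ) - ν + 2) / 2)
                * Real.Gamma (j + ((μ : ℝ) - ν + 2) / 2))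
              / (Real.Gamma (j + ((μ : ℝ) - ν + 2) / 2) * Real.pi * Real.Gamma (j + (μ : ℝ) + 1))
              * (2 / Real.Gamma ((ν : ℝ) / 2)) * B)
            * ((Real.cos ϑ + Real.cos φ) / 2) ^ (((μ : ℝ) + ν + 2) / 2)
            * gegenbauerCt j (((μ : ℝ) + 1) / 2) (Real.cos ϑ)
            * gegenbauerCt (j + ((μ - ν) / 2).toNat) (((ν : ℝ) + 1) / 2) (Real.cos φ) := by
  obtain ⟨-, hνμ, ⟨r, hr⟩, -⟩ := hcond
  have hm : μ = ν + 2 * ((μ - ν) / 2).toNat := by omega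
  intro ϑ hϑ φ hφ hpos
  exact theoremB_nu_pos_general (by exact_mod_cast hν) (by exact_mod_cast hm)
    ⟨hu_smooth, hu_eig⟩ hu_L2 hB hϑ hφ hpos
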